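/- arXiv:1407.7804 — 3 statements merged into one kernel-verified Lean document; each statement's English description precedes it below -/
import Mathlib

section
/- There exist δ > 0 depending only on γ, and constants C', W₀ > 0 depending only on C, c, γ, such that for all W ≥ W₀ both ‖P K g_α‖ ≤ C'·W^{−1−δ}·|μ| and ‖P K* g_α‖ ≤ C'·W^{−1−δ}·|μ|, where K* is the Hilbert-space adjoint of K. Equivalently, the off-diagonal blocks B = μ^{−1}(1−P)KP and C = μ^{−1}PK(1−P) of the normalized operator μ^{−1}K have operator norms O(W^{−1−δ}). -/
open MeasureTheory Complex Real
open scoped ComplexInnerProductSpace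

noncomputable section

/-- The Hilbert space `L²(ℝ, ℂ)`. -/
abbrev Hsp : Type := Lp ℂ 2 (volume : Measure ℝ)

/-- The kernel `K(x,y) = exp(−W²ζ²(x−y)² − U(x)/2 − U(y)/2)`. -/
def kerK (W : ℝ) (ζ : ℂ) (U : ℝ → ℂ) (x y : ℝ) : ℂ :=
  Complex.exp (-(W : ℂ)^2 * ζ^2 * ((x : ℂ) - (y : ℂ))^2 - U x / 2 - U y / 2)

/-- The harmonic-approximation kernel `K̃(x,y) = exp(−W²ζ²(x−y)² − (U''(0)/4)(x²+y²))`. -/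
def kerKt (W : ℝ) (ζ : ℂ) (U : ℝ → ℂ) (x y : ℝ) : ℂ :=
  Complex.exp (-(W : ℂ)^2 * ζ^2 * ((x : ℂ) - (y : ℂ))^2
    - (deriv (deriv U) 0 / 4) * ((x : ℂ)^2 + (y : ℂ)^2))

/-- `α = W·√(ζ²U''(0)/2)`, a positive real by assumption (U2). -/
def alph (W : ℝ) (ζ : ℂ) (U : ℝ → ℂ) : ℝ :=
  W * Real.sqrt ((ζ^2 * deriv (deriv U) 0).re / 2)

/-- `μ = √(π/(W²ζ² + α))`, principal branch. -/
def muK (W : ℝ) (ζ : ℂ) (U : ℝ → ℂ) : ℂ :=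
  ((π : ℂ) / ((W : ℂ)^2 * ζ^2 + (alph W ζ U : ℂ))) ^ (1/2 : ℂ)

/-- The Gaussian `g_α(x) = (2α/π)^{1/4}·exp(−αx²)` (for real `α > 0`, a unit vector). -/
def gaussF (α : ℝ) (x : ℝ) : ℂ :=
  (((2*α/π) ^ (1/4 : ℝ) : ℝ) : ℂ) * Complex.exp (-(α : ℂ) * (x : ℂ)^2)

/-- `T` is the integral operator on `L²(ℝ)` with kernel `k`. -/
def IsKerOp (k : ℝ → ℝ → ℂ) (T : Hsp →L[ℂ] Hsp) : Prop :=
  ∀ f : Hsp, ∀ᵐ x : ℝ, (T f : ℝ → ℂ) x = ∫ y : ℝ, k x y * (f : ℝ → ℂ) y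

/-- The orthogonal projection of `L²(ℝ)` onto the orthogonal complement of the
unit vector `g`: `P u = u − ⟪g, u⟫·g`. -/
def projP (g : Hsp) : Hsp →L[ℂ] Hsp :=
  ContinuousLinearMap.id ℂ Hsp - (innerSL ℂ g).smulRight g

/-- Assumptions (U1)–(U4) on the potential `U`, together with the conditions on `ζ`. -/
structure UHyp (C c γ : ℝ) (ζ : ℂ) (U : ℝ → ℂ) : Prop where
  hζ : ‖ζ‖ = 1
  hζre : 0 < (ζ^2).re
  hU1smooth : ContDiff ℝ (⊤ : ℕ∞) U
  hU1zero : U 0 = 0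
  hU1deriv : deriv U 0 = 0
  hU2im : (ζ^2 * deriv (deriv U) 0).im = 0
  hU2pos : 0 < (ζ^2 * deriv (deriv U) 0).re
  hU3 : ∀ x : ℝ, (1/C) * min 1 (x^2) ≤ (U x).re
  hU4 : ∃ UC : ℂ → ℂ, (∀ x : ℝ, UC x = U x) ∧
      AnalyticOnNhd ℂ UC {z : ℂ | |z.im| ≤ c} ∧
      ∀ z : ℂ, |z.im| ≤ c → ‖deriv UC z‖ ≤ C * (max 1 (UC z).re) ^ γ

end

/-!
The function `g_α` is a quasimode of `K`: with `w = W²ζ²` and `b = U''(0)/4`, the Gaussian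
convolution formula shows that `exp (-α x²)` is reproduced by the kernel
`exp (-w (x - y)² - b (x² + y²))` up to a relative error `O(‖b‖ / W²)` exactly because
`α² = 2 w b`. Replacing `U / 2` by its quadratic Taylor polynomial costs `O(|x|³)`, and `|x|` is of
size `α^(-1/2) ~ W^(-1/2)` on `g_α`, so that `‖K g_α - λ g_α‖ = O(W^(-3/2)) |μ|` for an approximate
eigenvalue `λ`, and `P` kills `λ g_α`. Since the kernel is symmetric and `g_α` is real,
`K* g_α` is the complex conjugate of `K g_α`. Uniformity in `U` and `ζ` comes from analyticity: the
growth condition keeps `U` bounded on a disc of fixed radius, so Cauchy's estimates control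
`U''(0)` and the Taylor remainder, and then the lower bound on `Re U` keeps `Re ζ²` away from `0`.
-/

/-! ### Complex analysis -/

lemma norm_sub_le_of_norm_sub_le_imp_norm_fderiv_le {E F : Type*} [NormedAddCommGroup E]
    [NormedSpace ℝ E] [NormedAddCommGroup F] [NormedSpace ℝ F] {f : E → F} {f' : E → E →L[ℝ] F}
    {a x : E} {r B C : ℝ} (hB : 0 ≤ B) (hCr : C * r < B)
    (hf : ∀ y ∈ Metric.closedBall a r, HasFDerivAt f (f' y) y)
    (hf' : ∀ y ∈ Metric.closedBall a r, ‖f y - f a‖ ≤ B → ‖f' y‖ ≤ C)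
    (hx : x ∈ Metric.closedBall a r) : ‖f x - f a‖ ≤ B := by
  have hmem : ∀ t ∈ Set.Icc (0 : ℝ) 1,
      AffineMap.lineMap a x t ∈ Metric.closedBall a r := fun t ht =>
    (convex_closedBall a r).lineMap_mem
      (Metric.mem_closedBall_self (dist_nonneg.trans (Metric.mem_closedBall.1 hx))) hx ht
  have hder : ∀ t ∈ Set.Icc (0 : ℝ) 1, HasDerivAt (fun s => f (AffineMap.lineMap a x s) - f a)
      (f' (AffineMap.lineMap a x t) (x - a)) t := fun t ht =>
    ((hf _ (hmem t ht)).comp_hasDerivAt t AffineMap.hasDerivAt_lineMap).sub_const _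
  have hB' : ∀ t : ℝ, HasDerivAt (fun s => B * s) B t := fun t => by
    simpa using (hasDerivAt_id t).const_mul B
  have hbound : ∀ t ∈ Set.Ico (0 : ℝ) 1, ‖f (AffineMap.lineMap a x t) - f a‖ = B * t →
      ‖f' (AffineMap.lineMap a x t) (x - a)‖ < B := fun t ht hft => by
    have hC := hf' _ (hmem t ⟨ht.1, ht.2.le⟩) (hft.le.trans (mul_le_of_le_one_right hB ht.2.le))
    have hxr : ‖x - a‖ ≤ r := mem_closedBall_iff_norm.1 hx
    calc ‖f' (AffineMap.lineMap a x t) (x - a)‖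
        ≤ ‖f' (AffineMap.lineMap a x t)‖ * ‖x - a‖ := ContinuousLinearMap.le_opNorm _ _
      _ ≤ C * r := mul_le_mul hC hxr (norm_nonneg _) ((norm_nonneg _).trans hC)
      _ < B := hCr
  simpa using image_norm_le_of_norm_deriv_right_lt_deriv_boundary
    (fun t ht => (hder t ht).continuousAt.continuousWithinAt)
    (fun t ht => (hder t ⟨ht.1, ht.2.le⟩).hasDerivWithinAt) (by simp) hB' hbound
    (Set.right_mem_Icc.2 zero_le_one)

lemma norm_sum_taylor_sub_le {E : Type*} [NormedAddCommGroup E] [NormedSpace ℂ E] [CompleteSpace E]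
    {f : ℂ → E} {a z : ℂ} {R B : ℝ} (hR : 0 < R) (hf : DiffContOnCl ℂ f (Metric.ball a R))
    (hB : ∀ w ∈ Metric.sphere a R, ‖f w‖ ≤ B) (hz : ‖z - a‖ ≤ R / 2) (n : ℕ) :
    ‖∑ k ∈ Finset.range n, (k.factorial : ℂ)⁻¹ • (z - a) ^ k • iteratedDeriv k f a - f z‖ ≤
      2 * B * (‖z - a‖ / R) ^ n := by
  have hzR : ‖z - a‖ / R ≤ 1 / 2 := by
    rw [div_le_div_iff₀ hR two_pos]; linarith
  have hsum : HasSum (fun k : ℕ => (k.factorial : ℂ)⁻¹ • (z - a) ^ k • iteratedDeriv k f a) (f z) :=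
    hasSum_taylorSeries_on_ball hf.differentiableOn (mem_ball_iff_norm.2 (by linarith))
  have hterm : ∀ k : ℕ, ‖(k.factorial : ℂ)⁻¹ • (z - a) ^ k • iteratedDeriv k f a‖ ≤
      B * (‖z - a‖ / R) ^ k := fun k => by
    rw [norm_smul, norm_smul, norm_inv, Complex.norm_natCast, norm_pow]
    calc (k.factorial : ℝ)⁻¹ * (‖z - a‖ ^ k * ‖iteratedDeriv k f a‖)
        ≤ (k.factorial : ℝ)⁻¹ * (‖z - a‖ ^ k * (k.factorial * B / R ^ k)) := by
          gcongr
          exact norm_iteratedDeriv_le_of_forall_mem_sphere_norm_le k hR hf hB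
      _ = B * (‖z - a‖ / R) ^ k := by rw [div_pow]; field_simp
  have hB0 : 0 ≤ B := by simpa using (norm_nonneg _).trans (hterm 0)
  calc _ ≤ B * (‖z - a‖ / R) ^ n / (1 - ‖z - a‖ / R) :=
        norm_sub_le_of_geometric_bound_of_hasSum (by linarith) hterm hsum n
    _ ≤ B * (‖z - a‖ / R) ^ n / (1 / 2) := by gcongr; linarith
    _ = _ := by ring

lemma iteratedDeriv_comp_ofReal {f : ℂ → ℂ} (hf : ∀ x : ℝ, AnalyticAt ℂ f x) (n : ℕ) :
    iteratedDeriv n (fun x : ℝ => f x) = fun x : ℝ => iteratedDeriv n f x := by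
  induction n with
  | zero => simp only [iteratedDeriv_zero]
  | succ n ih =>
    funext x
    rw [iteratedDeriv_succ, iteratedDeriv_succ, ih, iteratedDeriv_eq_iterate]
    exact ((hf x).iterated_deriv n).differentiableAt.hasDerivAt.comp_ofReal.deriv

lemma norm_cexp_sub_cexp_le {a b : ℂ} {r : ℝ} (ha : a.re ≤ r) (hb : b.re ≤ r) :
    ‖cexp a - cexp b‖ ≤ rexp r * ‖a - b‖ :=
  (convex_halfSpace_re_le r).norm_image_sub_le_of_norm_hasDerivWithin_le
    (fun z _ => (Complex.hasDerivAt_exp z).hasDerivWithinAt)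
    (fun z (hz : z.re ≤ r) => by rw [Complex.norm_exp]; gcongr) hb ha

lemma norm_cexp_le_one_of_re_nonpos {z : ℂ} (hz : z.re ≤ 0) : ‖cexp z‖ ≤ 1 := by
  rwa [Complex.norm_exp, Real.exp_le_one_iff]

/-! ### Uniform consequences of the assumptions on the potential -/

/-- A radius, depending only on the constants of `UHyp`, within the strip of analyticity, on which
the growth condition on `U'` forces the analytic extension of `U` to be bounded by `1`. -/
noncomputable def analyticRadius (C c : ℝ) : ℝ := min c (1 / (2 * C))

lemma analyticRadius_pos {C c : ℝ} (hC : 0 < C) (hc : 0 < c) : 0 < analyticRadius C c :=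
  lt_min hc (by positivity)

lemma le_of_forall_mul_sq_le_mul_sq_add_mul_cube {a b M r : ℝ} (hr : 0 < r)
    (h : ∀ x ∈ Set.Ioo 0 r, a * x ^ 2 ≤ b * x ^ 2 + M * x ^ 3) : a ≤ b := by
  have hlim : Filter.Tendsto (fun x : ℝ => b + M * x) (nhdsWithin 0 (Set.Ioi 0)) (nhds b) := by
    have hcont : Continuous fun x : ℝ => b + M * x := by fun_prop
    simpa using (hcont.tendsto 0).mono_left nhdsWithin_le_nhds
  refine ge_of_tendsto hlim ?_
  filter_upwards [Ioo_mem_nhdsGT hr] with x hx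
  refine le_of_mul_le_mul_right ?_ (pow_pos hx.1 2)
  linarith [h x hx]

namespace UHyp

variable {C c γ : ℝ} {ζ : ℂ} {U : ℝ → ℂ}

lemma exists_analytic_extension (h : UHyp C c γ ζ U) (hC : 0 < C) (hc : 0 < c) :
    ∃ f : ℂ → ℂ, (∀ x : ℝ, f x = U x) ∧
      DiffContOnCl ℂ f (Metric.ball 0 (analyticRadius C c)) ∧
      (∀ z ∈ Metric.closedBall 0 (analyticRadius C c), ‖f z‖ ≤ 1) ∧
      ∀ n, iteratedDeriv n f 0 = iteratedDeriv n U 0 := by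
  obtain ⟨f, hfU, hf, hf'⟩ := h.hU4
  have hstrip : ∀ z ∈ Metric.closedBall (0 : ℂ) (analyticRadius C c), |z.im| ≤ c := fun z hz =>
    (abs_im_le_norm z).trans ((mem_closedBall_zero_iff.1 hz).trans (min_le_left _ _))
  have hf0 : f 0 = 0 := by simpa [h.hU1zero] using hfU 0
  have hCr : C * analyticRadius C c < 1 := calc
    C * analyticRadius C c ≤ C * (1 / (2 * C)) := by gcongr; exact min_le_right _ _
    _ < 1 := by field_simp; norm_num
  have hreal : ∀ x : ℝ, AnalyticAt ℂ f x := fun x => hf x (by simpa using hc.le)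
  refine ⟨f, hfU, ?_, fun z hz => ?_, fun n => ?_⟩
  · exact DifferentiableOn.diffContOnCl_ball (U := Metric.closedBall 0 (analyticRadius C c))
      (fun z hz => (hf z (hstrip z hz)).differentiableAt.differentiableWithinAt) subset_rfl
  · have hderiv : ∀ y ∈ Metric.closedBall (0 : ℂ) (analyticRadius C c), HasFDerivAt f
        ((ContinuousLinearMap.toSpanSingleton ℂ (deriv f y)).restrictScalars ℝ) y := fun y hy =>
      (hf y (hstrip y hy)).differentiableAt.hasDerivAt.hasFDerivAt.restrictScalars ℝ
    simpa [hf0] using norm_sub_le_of_norm_sub_le_imp_norm_fderiv_le zero_le_one hCr hderiv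
      (fun y hy hfy => by
        rw [hf0, sub_zero] at hfy
        have hgrowth := hf' y (hstrip y hy)
        rw [max_eq_left ((re_le_norm _).trans hfy), Real.one_rpow, mul_one] at hgrowth
        simpa using hgrowth) hz
  · simp only [show U = fun x : ℝ => f x from funext fun x => (hfU x).symm,
      iteratedDeriv_comp_ofReal hreal, ofReal_zero]

lemma norm_deriv_deriv_le (h : UHyp C c γ ζ U) (hC : 0 < C) (hc : 0 < c) :
    ‖deriv (deriv U) 0‖ ≤ 2 / analyticRadius C c ^ 2 := by
  obtain ⟨f, -, hf, hf1, hfn⟩ := h.exists_analytic_extension hC hc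
  have hcauchy := norm_iteratedDeriv_le_of_forall_mem_sphere_norm_le 2 (analyticRadius_pos hC hc)
    hf fun z hz => hf1 z (Metric.sphere_subset_closedBall hz)
  rwa [hfn, iteratedDeriv_succ, iteratedDeriv_one, Nat.factorial_two, Nat.cast_ofNat,
    mul_one] at hcauchy

lemma norm_sub_quadratic_le (h : UHyp C c γ ζ U) (hC : 0 < C) (hc : 0 < c) {x : ℝ}
    (hx : |x| ≤ analyticRadius C c / 2) :
    ‖U x - deriv (deriv U) 0 / 2 * x ^ 2‖ ≤ 2 * (|x| / analyticRadius C c) ^ 3 := by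
  obtain ⟨f, hfU, hf, hf1, hfn⟩ := h.exists_analytic_extension hC hc
  have htaylor := norm_sum_taylor_sub_le (z := (x : ℂ)) (analyticRadius_pos hC hc) hf
    (fun z hz => hf1 z (Metric.sphere_subset_closedBall hz)) (by simpa using hx) 3
  have hsum : ∑ k ∈ Finset.range 3, (k.factorial : ℂ)⁻¹ • ((x : ℂ) - 0) ^ k • iteratedDeriv k f 0 =
      deriv (deriv U) 0 / 2 * x ^ 2 := by
    simp only [hfn, Finset.sum_range_succ, Finset.sum_range_zero, iteratedDeriv_succ,
      iteratedDeriv_zero, h.hU1zero, h.hU1deriv, Nat.factorial_two, sub_zero, smul_eq_mul]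
    push_cast
    ring
  rw [hsum, norm_sub_rev, hfU, sub_zero, norm_real, Real.norm_eq_abs, mul_one] at htaylor
  exact htaylor

lemma two_div_le_re_deriv_deriv (h : UHyp C c γ ζ U) (hC : 0 < C) (hc : 0 < c) :
    2 / C ≤ (deriv (deriv U) 0).re := by
  have hR := analyticRadius_pos hC hc
  have hlt : 1 / C ≤ (deriv (deriv U) 0).re / 2 := by
    refine le_of_forall_mul_sq_le_mul_sq_add_mul_cube (M := 2 / analyticRadius C c ^ 3)
      (lt_min one_pos (half_pos hR)) fun x ⟨hx0, hx⟩ => ?_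
    obtain ⟨hx1, hxR⟩ := lt_min_iff.1 hx
    have hlower := h.hU3 x
    rw [min_eq_right (pow_le_one₀ hx0.le hx1.le)] at hlower
    have htaylor := (re_le_norm _).trans
      (h.norm_sub_quadratic_le hC hc (x := x) (by rw [abs_of_pos hx0]; exact hxR.le))
    rw [sub_re, ← ofReal_pow, re_mul_ofReal, div_ofNat_re, abs_of_pos hx0, div_pow] at htaylor
    calc 1 / C * x ^ 2 ≤ (U x).re := hlower
      _ ≤ (deriv (deriv U) 0).re / 2 * x ^ 2 + 2 * (x ^ 3 / analyticRadius C c ^ 3) := by linarith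
      _ = _ := by ring
  calc 2 / C = 2 * (1 / C) := by ring
    _ ≤ _ := by linarith

lemma re_deriv_deriv_nonneg (h : UHyp C c γ ζ U) (hC : 0 < C) (hc : 0 < c) :
    0 ≤ (deriv (deriv U) 0).re :=
  (by positivity : (0 : ℝ) ≤ 2 / C).trans (h.two_div_le_re_deriv_deriv hC hc)

lemma norm_zeta_sq (h : UHyp C c γ ζ U) : ‖ζ ^ 2‖ = 1 := by
  rw [norm_pow, h.hζ, one_pow]

lemma zeta_sq_mul_deriv_deriv (h : UHyp C c γ ζ U) :
    ζ ^ 2 * deriv (deriv U) 0 = ‖deriv (deriv U) 0‖ := by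
  have hreal : ζ ^ 2 * deriv (deriv U) 0 = ((ζ ^ 2 * deriv (deriv U) 0).re : ℂ) :=
    Complex.ext (ofReal_re _).symm (h.hU2im.trans (ofReal_im _).symm)
  have hnorm : ‖deriv (deriv U) 0‖ = (ζ ^ 2 * deriv (deriv U) 0).re := by
    rw [← one_mul ‖_‖, ← h.norm_zeta_sq, ← norm_mul, hreal, norm_real, ofReal_re,
      norm_of_nonneg h.hU2pos.le]
  rw [hnorm, ← hreal]

lemma re_deriv_deriv (h : UHyp C c γ ζ U) :
    (deriv (deriv U) 0).re = ‖deriv (deriv U) 0‖ * (ζ ^ 2).re := by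
  have hconj : deriv (deriv U) 0 = ‖deriv (deriv U) 0‖ * (starRingEnd ℂ) (ζ ^ 2) := by
    rw [← h.zeta_sq_mul_deriv_deriv, mul_right_comm, Complex.mul_conj, normSq_eq_norm_sq,
      h.norm_zeta_sq, one_pow, ofReal_one, one_mul]
  conv_lhs => rw [hconj, re_ofReal_mul, conj_re]

lemma div_le_re_zeta_sq (h : UHyp C c γ ζ U) (hC : 0 < C) (hc : 0 < c) :
    analyticRadius C c ^ 2 / C ≤ (ζ ^ 2).re := by
  have hR := analyticRadius_pos hC hc
  have hle : 2 / C ≤ 2 / analyticRadius C c ^ 2 * (ζ ^ 2).re := calc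
    2 / C ≤ ‖deriv (deriv U) 0‖ * (ζ ^ 2).re := by
      rw [← h.re_deriv_deriv]; exact h.two_div_le_re_deriv_deriv hC hc
    _ ≤ _ := mul_le_mul_of_nonneg_right (h.norm_deriv_deriv_le hC hc) h.hζre.le
  calc analyticRadius C c ^ 2 / C = analyticRadius C c ^ 2 / 2 * (2 / C) := by ring
    _ ≤ analyticRadius C c ^ 2 / 2 * (2 / analyticRadius C c ^ 2 * (ζ ^ 2).re) := by gcongr
    _ = (ζ ^ 2).re := by field_simp

lemma re_neg_half_nonpos (h : UHyp C c γ ζ U) (hC : 0 < C) (x : ℝ) : (-(U x / 2)).re ≤ 0 := by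
  have hU : 0 ≤ (U x).re := (by positivity : 0 ≤ 1 / C * min 1 (x ^ 2)).trans (h.hU3 x)
  rw [neg_re, div_ofNat_re]
  linarith

lemma norm_cexp_sub_cexp_quadratic_le (h : UHyp C c γ ζ U) (hC : 0 < C) (hc : 0 < c) (x : ℝ) :
    ‖cexp (-(U x / 2)) - cexp (-(deriv (deriv U) 0 / 4 * x ^ 2))‖ ≤
      16 / analyticRadius C c ^ 3 * |x| ^ 3 := by
  have hR := analyticRadius_pos hC hc
  have hU := h.re_neg_half_nonpos hC x
  have hq : (-(deriv (deriv U) 0 / 4 * x ^ 2)).re ≤ 0 := by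
    rw [neg_re, ← ofReal_pow, re_mul_ofReal, div_ofNat_re, neg_nonpos]
    have := h.re_deriv_deriv_nonneg hC hc
    positivity
  have hpow : 16 / analyticRadius C c ^ 3 * |x| ^ 3 = 16 * (|x| / analyticRadius C c) ^ 3 := by
    ring
  rw [hpow]
  rcases le_or_gt |x| (analyticRadius C c / 2) with hx | hx
  · calc _ ≤ ‖-(U x / 2) - -(deriv (deriv U) 0 / 4 * (x : ℂ) ^ 2)‖ := by
          simpa using norm_cexp_sub_cexp_le hU hq
      _ = ‖U x - deriv (deriv U) 0 / 2 * x ^ 2‖ / 2 := by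
          rw [← Complex.norm_two, ← norm_div, norm_sub_rev]
          ring_nf
      _ ≤ 2 * (|x| / analyticRadius C c) ^ 3 / 2 := by
          gcongr
          exact h.norm_sub_quadratic_le hC hc hx
      _ ≤ _ := by linarith [show 0 ≤ (|x| / analyticRadius C c) ^ 3 by positivity]
  · have hxR : 1 / 2 ≤ |x| / analyticRadius C c := by
      rw [div_le_div_iff₀ two_pos hR]; linarith
    calc _ ≤ ‖cexp (-(U x / 2))‖ + ‖cexp (-(deriv (deriv U) 0 / 4 * (x : ℂ) ^ 2))‖ :=
          norm_sub_le _ _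
      _ ≤ 16 * (1 / 2) ^ 3 := by
          linarith [norm_cexp_le_one_of_re_nonpos hU, norm_cexp_le_one_of_re_nonpos hq]
      _ ≤ _ := by gcongr

end UHyp

/-! ### Gaussian integrals -/

lemma abs_pow_mul_exp_neg_mul_sq_le {c : ℝ} (hc : 0 < c) (n : ℕ) (x : ℝ) :
    |x| ^ n * rexp (-c * x ^ 2) ≤ √(n.factorial / (2 * c) ^ n) := by
  refine Real.le_sqrt_of_sq_le ?_
  have hexp := Real.pow_div_factorial_le_exp (2 * c * x ^ 2) (by positivity) n
  rw [mul_pow, ← pow_mul, mul_comm n, pow_mul, sq_abs, ← Real.exp_nat_mul,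
    show ((2 : ℕ) : ℝ) * (-c * x ^ 2) = -(2 * c * x ^ 2) by push_cast; ring, Real.exp_neg,
    ← div_eq_mul_inv, div_le_div_iff₀ (Real.exp_pos _) (by positivity), ← mul_pow,
    mul_comm (x ^ 2)]
  rwa [div_le_iff₀' (by positivity)] at hexp

lemma norm_cpow_one_half (z : ℂ) : ‖z ^ (1 / 2 : ℂ)‖ = √‖z‖ := by
  rw [Real.sqrt_eq_rpow, ← Complex.norm_cpow_real]
  norm_num

lemma integral_cexp_gaussian_convolution {w s : ℂ} (h : 0 < (w + s).re) (x : ℝ) :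
    ∫ y : ℝ, cexp (-w * (x - y : ℝ) ^ 2) * cexp (-s * y ^ 2) =
      (π / (w + s)) ^ (1 / 2 : ℂ) * cexp (-(w * s / (w + s)) * x ^ 2) := by
  have hne : w + s ≠ 0 := fun h0 => by simp [h0] at h
  have hquad := integral_cexp_quadratic (b := -(w + s)) (by rw [neg_re]; linarith)
    (2 * w * x) (-w * x ^ 2)
  rw [neg_neg] at hquad
  convert hquad using 2
  · funext y
    rw [← Complex.exp_add]
    push_cast
    ring_nf
  · congr 1
    field_simp
    ring

lemma exp_neg_mul_sub_sq_mul_exp_neg_mul_sq_le {p q : ℝ} (hq : 0 ≤ q) (hqp : q ≤ p) (hp : 0 < p)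
    (x y : ℝ) :
    rexp (-p * (x - y) ^ 2) * rexp (-q * y ^ 2) ≤
      rexp (-(q / 2) * x ^ 2) * rexp (-p * (y - p / (p + q) * x) ^ 2) := by
  rw [← Real.exp_add, ← Real.exp_add, Real.exp_le_exp]
  have hsquare : p * (x - y) ^ 2 + q * y ^ 2 =
      (p + q) * (y - p / (p + q) * x) ^ 2 + p / (p + q) * (q * x ^ 2) := by
    field_simp
    ring
  have hhalf : 1 / 2 ≤ p / (p + q) := by
    rw [div_le_div_iff₀ two_pos (by positivity)]; linarith
  nlinarith [mul_nonneg hq (sq_nonneg (y - p / (p + q) * x)),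
    mul_le_mul_of_nonneg_right hhalf (mul_nonneg hq (sq_nonneg x))]

lemma norm_integral_gaussian_mul_le {w : ℂ} {f : ℝ → ℂ} {q B : ℝ} (hq : 0 ≤ q) (hqw : q ≤ w.re)
    (hw : 0 < w.re) (hf : ∀ y, ‖f y‖ ≤ B * rexp (-q * y ^ 2)) (x : ℝ) :
    ‖∫ y, cexp (-w * (x - y : ℝ) ^ 2) * f y‖ ≤ √(π / w.re) * B * rexp (-(q / 2) * x ^ 2) := by
  have hB : 0 ≤ B := by simpa using (norm_nonneg _).trans (hf 0)
  set x₀ := w.re / (w.re + q) * x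
  have hbound : ∀ y, ‖cexp (-w * (x - y : ℝ) ^ 2) * f y‖ ≤
      B * rexp (-(q / 2) * x ^ 2) * rexp (-w.re * (y - x₀) ^ 2) := fun y => calc
    _ = rexp (-w.re * (x - y) ^ 2) * ‖f y‖ := by rw [norm_mul, norm_cexp_neg_mul_sq]
    _ ≤ rexp (-w.re * (x - y) ^ 2) * (B * rexp (-q * y ^ 2)) := by gcongr; exact hf y
    _ = B * (rexp (-w.re * (x - y) ^ 2) * rexp (-q * y ^ 2)) := by ring
    _ ≤ B * (rexp (-(q / 2) * x ^ 2) * rexp (-w.re * (y - x₀) ^ 2)) := by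
      gcongr B * ?_
      exact exp_neg_mul_sub_sq_mul_exp_neg_mul_sq_le hq hqw hw x y
    _ = _ := by ring
  have hint : Integrable fun y : ℝ => rexp (-w.re * (y - x₀) ^ 2) :=
    (integrable_exp_neg_mul_sq hw).comp_sub_right x₀
  calc _ ≤ ∫ y, B * rexp (-(q / 2) * x ^ 2) * rexp (-w.re * (y - x₀) ^ 2) :=
        norm_integral_le_of_norm_le (hint.const_mul _) (Filter.Eventually.of_forall hbound)
    _ = B * rexp (-(q / 2) * x ^ 2) * √(π / w.re) := by
        rw [integral_const_mul, integral_sub_right_eq_self (fun y : ℝ => rexp (-w.re * y ^ 2)) x₀,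
          integral_gaussian]
    _ = _ := by ring

lemma integrable_gaussian_mul_of_norm_le {w s : ℂ} {f : ℝ → ℂ} (hw : 0 ≤ w.re) (hs : 0 < s.re)
    (hf : Continuous f) (hf1 : ∀ y, ‖f y‖ ≤ 1) (x : ℝ) :
    Integrable fun y : ℝ => cexp (-w * (x - y : ℝ) ^ 2) * (f y * cexp (-s * y ^ 2)) := by
  refine (integrable_exp_neg_mul_sq hs).mono' (by fun_prop)
    (Filter.Eventually.of_forall fun y => ?_)
  rw [norm_mul, norm_mul, norm_cexp_neg_mul_sq, norm_cexp_neg_mul_sq]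
  have hexp : rexp (-w.re * (x - y) ^ 2) ≤ 1 :=
    Real.exp_le_one_iff.2 (by nlinarith [sq_nonneg (x - y)])
  calc _ ≤ 1 * (1 * rexp (-s.re * y ^ 2)) := by gcongr; exact hf1 y
    _ = _ := by ring

lemma norm_cexp_mul_sq_sub_cexp_mul_sq_le {s t : ℂ} {β : ℝ} (hs : β ≤ s.re) (ht : β ≤ t.re)
    (x : ℝ) :
    ‖cexp (-s * x ^ 2) - cexp (-t * x ^ 2)‖ ≤ ‖s - t‖ * (|x| ^ 2 * rexp (-β * x ^ 2)) := by
  have hre : ∀ u : ℂ, β ≤ u.re → (-u * (x : ℂ) ^ 2).re ≤ -β * x ^ 2 := fun u hu => by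
    rw [← ofReal_pow, re_mul_ofReal, neg_re]
    gcongr
  calc _ ≤ rexp (-β * x ^ 2) * ‖-s * (x : ℂ) ^ 2 - -t * (x : ℂ) ^ 2‖ :=
        norm_cexp_sub_cexp_le (hre s hs) (hre t ht)
    _ = rexp (-β * x ^ 2) * (‖s - t‖ * |x| ^ 2) := by
        rw [← sub_mul, norm_mul, norm_pow, norm_real, Real.norm_eq_abs, ← norm_neg (s - t)]
        ring_nf
    _ = _ := by ring

/-! ### Pointwise quasimode estimate -/

/-- The Gaussian convolution kernel of complex parameter `w`, multiplied by `e` on both sides. -/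
noncomputable def gaussKernel (w : ℂ) (e : ℝ → ℂ) (x y : ℝ) : ℂ :=
  e x * cexp (-w * (x - y : ℝ) ^ 2) * e y

/-- `e` is a continuous weight bounded by `1` which agrees with the Gaussian `exp (-b x ^ 2)` to
third order, with constant `M`. -/
structure IsAlmostGaussian (b : ℂ) (M : ℝ) (e : ℝ → ℂ) : Prop where
  continuous : Continuous e
  norm_le_one : ∀ x, ‖e x‖ ≤ 1
  norm_sub_le : ∀ x : ℝ, ‖e x - cexp (-(b * x ^ 2))‖ ≤ M * |x| ^ 3

/-- The Gaussian `exp (-α x ^ 2)` is, to leading order, the ground state of the operator with kernel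
`exp (-w (x - y) ^ 2 - b (x ^ 2 + y ^ 2))`, in the semiclassical regime `‖b‖ ≪ α ≪ re w`. -/
structure IsGroundScale (w b : ℂ) (α : ℝ) : Prop where
  pos : 0 < α
  le_re : α ≤ w.re
  norm_le : 8 * ‖b‖ ≤ α
  sq_eq : (α : ℂ) ^ 2 = 2 * w * b

/-- The approximate eigenvalue attached to `exp (-α x ^ 2)`: the constant factor which the Gaussian
integral against `exp (-w (x - y) ^ 2 - b y ^ 2)` produces. -/
noncomputable def groundEigenvalue (w b : ℂ) (α : ℝ) : ℂ :=
  (π / (w + (b + α))) ^ (1 / 2 : ℂ)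

lemma IsAlmostGaussian.norm_sub_mul_exp_le {b : ℂ} {M α β c : ℝ} {e : ℝ → ℂ}
    (he : IsAlmostGaussian b M e) (hα : 0 < α) (hβ : c + α / 2 ≤ β) (x : ℝ) :
    ‖e x - cexp (-(b * x ^ 2))‖ * rexp (-β * x ^ 2) ≤ M * √(6 / α ^ 3) * rexp (-c * x ^ 2) := by
  have hM : 0 ≤ M := by simpa using (norm_nonneg _).trans (he.norm_sub_le 1)
  have hcube := abs_pow_mul_exp_neg_mul_sq_le (half_pos hα) 3 x
  rw [mul_div_cancel₀ α two_ne_zero, show Nat.factorial 3 = 6 from rfl, Nat.cast_ofNat] at hcube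
  calc _ ≤ M * |x| ^ 3 * rexp (-(c + α / 2) * x ^ 2) := by
        gcongr
        exact he.norm_sub_le x
    _ = M * (|x| ^ 3 * rexp (-(α / 2) * x ^ 2)) * rexp (-c * x ^ 2) := by
        rw [mul_assoc, mul_assoc, mul_assoc, ← Real.exp_add]
        ring_nf
    _ ≤ _ := by gcongr

namespace IsGroundScale

variable {w b : ℂ} {α M : ℝ} {e : ℝ → ℂ}

lemma re_pos (h : IsGroundScale w b α) : 0 < w.re := h.pos.trans_le h.le_re

lemma add_re_pos (h : IsGroundScale w b α) : 0 < (b + α).re := by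
  rw [add_re, ofReal_re]
  linarith [neg_abs_le b.re, abs_re_le_norm b, h.norm_le, h.pos, norm_nonneg b]

lemma re_le_norm_add (h : IsGroundScale w b α) : w.re ≤ ‖w + (b + α)‖ := calc
  w.re ≤ (w + (b + α)).re := by rw [add_re w]; linarith [h.add_re_pos]
  _ ≤ _ := re_le_norm _

lemma norm_groundEigenvalue_le (h : IsGroundScale w b α) :
    ‖groundEigenvalue w b α‖ ≤ √(π / w.re) := by
  rw [groundEigenvalue, norm_cpow_one_half, norm_div, norm_real, norm_of_nonneg pi_pos.le]
  have := h.re_pos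
  gcongr
  exact h.re_le_norm_add

lemma norm_correction_le (h : IsGroundScale w b α) :
    ‖b ^ 2 / (w + (b + α))‖ ≤ ‖b‖ ^ 2 / w.re := by
  rw [norm_div, norm_pow]
  have := h.re_pos
  gcongr
  exact h.re_le_norm_add

lemma norm_correction_le_norm (h : IsGroundScale w b α) :
    ‖b ^ 2 / (w + (b + α))‖ ≤ ‖b‖ := by
  refine h.norm_correction_le.trans ?_
  rw [div_le_iff₀ h.re_pos, sq]
  gcongr
  linarith [h.norm_le, h.le_re, norm_nonneg b]

/-- The computation that singles out `α ^ 2 = 2 * w * b`. -/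
lemma convolution_exponent_eq (h : IsGroundScale w b α) :
    w * (b + α) / (w + (b + α)) = α - b + b ^ 2 / (w + (b + α)) := by
  have hne : w + (b + α) ≠ 0 := norm_pos_iff.1 (h.re_pos.trans_le h.re_le_norm_add)
  rw [div_eq_iff hne, add_mul, div_mul_cancel₀ _ hne]
  linear_combination -h.sq_eq

lemma le_re_convolution_exponent (h : IsGroundScale w b α) :
    3 / 4 * α ≤ (w * (b + α) / (w + (b + α))).re := by
  rw [h.convolution_exponent_eq, add_re, sub_re, ofReal_re]
  linarith [neg_abs_le (b ^ 2 / (w + (b + α))).re, abs_re_le_norm (b ^ 2 / (w + (b + α))),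
    h.norm_correction_le_norm, re_le_norm b, h.norm_le]

lemma norm_integral_mul_sub_le (h : IsGroundScale w b α) (he : IsAlmostGaussian b M e) (x : ℝ) :
    ‖∫ y : ℝ, cexp (-w * (x - y : ℝ) ^ 2) *
        ((e y - cexp (-(b * y ^ 2))) * cexp (-α * y ^ 2))‖ ≤
      √(π / w.re) * (M * √(6 / α ^ 3)) * rexp (-(α / 4) * x ^ 2) := by
  have hα := h.pos
  have hbound : ∀ y : ℝ, ‖(e y - cexp (-(b * y ^ 2))) * cexp (-α * y ^ 2)‖ ≤
      M * √(6 / α ^ 3) * rexp (-(α / 2) * y ^ 2) := fun y => by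
    rw [norm_mul, norm_cexp_neg_mul_sq, ofReal_re]
    exact he.norm_sub_mul_exp_le hα (by linarith) y
  convert norm_integral_gaussian_mul_le (half_pos hα).le (by linarith [h.le_re]) h.re_pos hbound x
    using 3
  ring

lemma norm_sub_mul_convolution_le (h : IsGroundScale w b α) (he : IsAlmostGaussian b M e) (x : ℝ) :
    ‖(e x - cexp (-(b * x ^ 2))) * cexp (-(w * (b + α) / (w + (b + α))) * x ^ 2)‖ ≤
      M * √(6 / α ^ 3) * rexp (-(α / 4) * x ^ 2) := by
  rw [norm_mul, norm_cexp_neg_mul_sq]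
  exact he.norm_sub_mul_exp_le h.pos (by linarith [h.le_re_convolution_exponent]) x

lemma norm_gaussian_sub_gaussian_le (h : IsGroundScale w b α) (x : ℝ) :
    ‖cexp (-(b * x ^ 2)) * cexp (-(w * (b + α) / (w + (b + α))) * x ^ 2) - cexp (-α * x ^ 2)‖ ≤
      ‖b‖ / w.re * rexp (-(α / 4) * x ^ 2) := by
  have hα := h.pos
  have hw := h.re_pos
  set κ := b ^ 2 / (w + (b + α)) with hκ
  have hκre : 3 / 4 * α ≤ (α + κ).re := by
    rw [add_re, ofReal_re]
    linarith [neg_abs_le κ.re, abs_re_le_norm κ, h.norm_correction_le_norm, h.norm_le]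
  have hexp : cexp (-(b * x ^ 2)) * cexp (-(w * (b + α) / (w + (b + α))) * x ^ 2) =
      cexp (-(α + κ) * x ^ 2) := by
    rw [← Complex.exp_add, h.convolution_exponent_eq, ← hκ]
    ring_nf
  have hsq := abs_pow_mul_exp_neg_mul_sq_le (half_pos hα) 2 x
  rw [Nat.factorial_two, mul_div_cancel₀ α two_ne_zero, Nat.cast_ofNat, Real.sqrt_div zero_le_two,
    Real.sqrt_sq hα.le] at hsq
  rw [hexp]
  calc _ ≤ ‖α + κ - α‖ * (|x| ^ 2 * rexp (-(3 / 4 * α) * x ^ 2)) :=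
        norm_cexp_mul_sq_sub_cexp_mul_sq_le hκre (by rw [ofReal_re]; linarith) x
    _ = ‖κ‖ * (|x| ^ 2 * rexp (-(α / 2) * x ^ 2)) * rexp (-(α / 4) * x ^ 2) := by
        rw [add_sub_cancel_left, mul_assoc, mul_assoc, ← Real.exp_add]
        ring_nf
    _ ≤ ‖b‖ ^ 2 / w.re * (√2 / α) * rexp (-(α / 4) * x ^ 2) := by
        gcongr
        exact h.norm_correction_le
    _ = ‖b‖ / w.re * (‖b‖ * √2 / α) * rexp (-(α / 4) * x ^ 2) := by ring
    _ ≤ ‖b‖ / w.re * 1 * rexp (-(α / 4) * x ^ 2) := by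
        gcongr
        rw [div_le_one hα]
        nlinarith [h.norm_le, norm_nonneg b, Real.sqrt_le_sqrt (show (2 : ℝ) ≤ 2 ^ 2 by norm_num),
          Real.sqrt_sq (zero_le_two (α := ℝ))]
    _ = _ := by ring

lemma integral_gaussKernel_mul_eq (h : IsGroundScale w b α) (he : IsAlmostGaussian b M e) (x : ℝ) :
    ∫ y : ℝ, gaussKernel w e x y * cexp (-α * y ^ 2) =
      e x * ((∫ y : ℝ, cexp (-w * (x - y : ℝ) ^ 2) *
          ((e y - cexp (-(b * y ^ 2))) * cexp (-α * y ^ 2))) +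
        groundEigenvalue w b α * cexp (-(w * (b + α) / (w + (b + α))) * x ^ 2)) := by
  have hint_e := integrable_gaussian_mul_of_norm_le (s := α) h.re_pos.le h.pos he.continuous
    he.norm_le_one x
  have hint_model := integrable_gaussian_mul_of_norm_le (f := fun _ => 1) h.re_pos.le h.add_re_pos
    continuous_const (fun _ => norm_one.le) x
  simp only [one_mul] at hint_model
  have hconv := integral_cexp_gaussian_convolution (w := w) (s := b + α)
    (by rw [add_re w]; linarith [h.re_pos, h.add_re_pos]) x
  have hsub : (∫ y : ℝ, cexp (-w * (x - y : ℝ) ^ 2) *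
        ((e y - cexp (-(b * y ^ 2))) * cexp (-α * y ^ 2))) =
      (∫ y : ℝ, cexp (-w * (x - y : ℝ) ^ 2) * (e y * cexp (-α * y ^ 2))) -
        ∫ y : ℝ, cexp (-w * (x - y : ℝ) ^ 2) * cexp (-(b + α) * y ^ 2) := by
    rw [← integral_sub hint_e hint_model]
    congr 1 with y
    rw [sub_mul, ← Complex.exp_add]
    ring_nf
  rw [groundEigenvalue, ← hconv, hsub, sub_add_cancel, ← integral_const_mul]
  congr 1 with y
  rw [gaussKernel]
  ring

/-- The three errors come from replacing `e y` by `exp (-b y ^ 2)` under the integral, from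
replacing `e x` by `exp (-b x ^ 2)` in front of it, and from the exponent of the resulting
Gaussian. -/
lemma norm_integral_gaussKernel_sub_le (h : IsGroundScale w b α) (he : IsAlmostGaussian b M e)
    (x : ℝ) :
    ‖(∫ y : ℝ, gaussKernel w e x y * cexp (-α * y ^ 2)) -
        groundEigenvalue w b α * cexp (-α * x ^ 2)‖ ≤
      √(π / w.re) * (2 * (M * √(6 / α ^ 3)) + ‖b‖ / w.re) * rexp (-(α / 4) * x ^ 2) := by
  rw [h.integral_gaussKernel_mul_eq he]
  set T := cexp (-(w * (b + α) / (w + (b + α))) * x ^ 2)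
  set R := ∫ y : ℝ, cexp (-w * (x - y : ℝ) ^ 2) *
    ((e y - cexp (-(b * y ^ 2))) * cexp (-α * y ^ 2))
  have hsplit : e x * (R + groundEigenvalue w b α * T) -
        groundEigenvalue w b α * cexp (-α * x ^ 2) =
      e x * R + groundEigenvalue w b α * ((e x - cexp (-(b * x ^ 2))) * T +
        (cexp (-(b * x ^ 2)) * T - cexp (-α * x ^ 2))) := by
    ring
  rw [hsplit]
  calc _ ≤ ‖e x‖ * ‖R‖ + ‖groundEigenvalue w b α‖ * (‖(e x - cexp (-(b * x ^ 2))) * T‖ +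
        ‖cexp (-(b * x ^ 2)) * T - cexp (-α * x ^ 2)‖) := by
        refine (norm_add_le _ _).trans ?_
        rw [norm_mul, norm_mul]
        gcongr
        exact norm_add_le _ _
    _ ≤ 1 * (√(π / w.re) * (M * √(6 / α ^ 3)) * rexp (-(α / 4) * x ^ 2)) +
        √(π / w.re) * (M * √(6 / α ^ 3) * rexp (-(α / 4) * x ^ 2) +
          ‖b‖ / w.re * rexp (-(α / 4) * x ^ 2)) := by
        gcongr
        · exact he.norm_le_one x
        · exact h.norm_integral_mul_sub_le he x
        · exact h.norm_groundEigenvalue_le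
        · exact h.norm_sub_mul_convolution_le he x
        · exact h.norm_gaussian_sub_gaussian_le x
    _ = _ := by ring

end IsGroundScale

/-! ### Operators on `L²(ℝ)` -/

lemma norm_gaussF {α : ℝ} (hα : 0 ≤ α) (x : ℝ) :
    ‖gaussF α x‖ = (2 * α / π) ^ (1 / 4 : ℝ) * rexp (-α * x ^ 2) := by
  rw [gaussF, norm_mul, norm_real, norm_of_nonneg (by positivity), norm_cexp_neg_mul_sq, ofReal_re]

lemma norm_gaussF_sq {α : ℝ} (hα : 0 ≤ α) (x : ℝ) :
    ‖gaussF α x‖ ^ 2 = √(2 * α / π) * rexp (-(2 * α) * x ^ 2) := by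
  have hconst : ((2 * α / π) ^ (1 / 4 : ℝ)) ^ 2 = √(2 * α / π) := by
    rw [← Real.rpow_mul_natCast (by positivity), Real.sqrt_eq_rpow]
    norm_num
  rw [norm_gaussF hα, mul_pow, hconst, ← Real.exp_nat_mul]
  push_cast
  ring_nf

lemma star_gaussF (α x : ℝ) : star (gaussF α x) = gaussF α x := by
  rw [gaussF, RCLike.star_def, map_mul, conj_ofReal, ← Complex.exp_conj]
  simp only [map_mul, map_neg, map_pow, conj_ofReal]

lemma continuous_gaussF (α : ℝ) : Continuous (gaussF α) := by
  unfold gaussF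
  fun_prop

lemma memLp_gaussF {α : ℝ} (hα : 0 < α) : MemLp (gaussF α) 2 volume := by
  rw [memLp_two_iff_integrable_sq_norm (continuous_gaussF α).aestronglyMeasurable]
  simp_rw [norm_gaussF_sq hα.le]
  exact (integrable_exp_neg_mul_sq (by positivity)).const_mul _

lemma integral_norm_gaussF_sq {α : ℝ} (hα : 0 < α) : ∫ x, ‖gaussF α x‖ ^ 2 = 1 := by
  simp_rw [norm_gaussF_sq hα.le]
  rw [integral_const_mul, integral_gaussian, ← Real.sqrt_mul (by positivity),
    div_mul_div_cancel₀ pi_ne_zero, div_self (by positivity), Real.sqrt_one]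

lemma norm_eq_one_of_ae_eq_gaussF {α : ℝ} (hα : 0 < α) {g : Hsp}
    (hg : ∀ᵐ x : ℝ, (g : ℝ → ℂ) x = gaussF α x) : ‖g‖ = 1 := by
  rw [← sq_eq_sq₀ (norm_nonneg g) zero_le_one, one_pow, ← integral_norm_gaussF_sq hα,
    ← @inner_self_eq_norm_sq ℂ, L2.inner_def, ← integral_re (L2.integrable_inner g g)]
  refine integral_congr_ae ?_
  filter_upwards [hg] with x hx
  rw [inner_self_eq_norm_sq, hx]

lemma norm_le_of_ae_norm_le_mul_norm_gaussF {β B : ℝ} (hβ : 0 < β) {u : Hsp}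
    (hu : ∀ᵐ x : ℝ, ‖(u : ℝ → ℂ) x‖ ≤ B * ‖gaussF β x‖) : ‖u‖ ≤ B := by
  have hg := (memLp_gaussF hβ).coeFn_toLp
  rw [← mul_one B, ← norm_eq_one_of_ae_eq_gaussF hβ hg]
  refine Lp.norm_le_mul_norm_of_ae_le_mul ?_
  filter_upwards [hu, hg] with x hux hgx
  rwa [hgx]

lemma rpow_mul_exp_eq_mul_norm_gaussF {α β : ℝ} (hα : 0 ≤ α) (hβ : 0 < β) (x : ℝ) :
    (2 * α / π) ^ (1 / 4 : ℝ) * rexp (-β * x ^ 2) = (α / β) ^ (1 / 4 : ℝ) * ‖gaussF β x‖ := by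
  rw [norm_gaussF hβ.le, ← mul_assoc, ← Real.mul_rpow (by positivity) (by positivity)]
  congr 2
  field_simp

lemma norm_projP_le_norm_sub_smul {g : Hsp} (hg : ‖g‖ = 1) (u : Hsp) (a : ℂ) :
    ‖projP g u‖ ≤ ‖u - a • g‖ := by
  have hproj : ∀ v, projP g v = (ℂ ∙ g)ᗮ.starProjection v := fun v => by
    rw [Submodule.starProjection_orthogonal_val, Submodule.starProjection_unit_singleton ℂ hg]
    rfl
  have hgg : (ℂ ∙ g)ᗮ.starProjection g = 0 :=
    Submodule.starProjection_orthogonal_apply_eq_zero (Submodule.mem_span_singleton_self g)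
  calc ‖projP g u‖ = ‖(ℂ ∙ g)ᗮ.starProjection (u - a • g)‖ := by
        rw [hproj, map_sub, map_smul, hgg, smul_zero, sub_zero]
    _ ≤ ‖u - a • g‖ := Submodule.norm_starProjection_apply_le _ _

lemma norm_star_sub_star_smul_star (u g : Hsp) (a : ℂ) :
    ‖star u - star a • star g‖ = ‖u - a • g‖ := by
  rw [Lp.norm_def, Lp.norm_def]
  congr 1
  refine eLpNorm_congr_norm_ae ?_
  filter_upwards [Lp.coeFn_sub (star u) (star a • star g), Lp.coeFn_smul (star a) (star g),
    Lp.coeFn_star u, Lp.coeFn_star g, Lp.coeFn_sub u (a • g), Lp.coeFn_smul a g]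
    with x h1 h2 h3 h4 h5 h6
  rw [h1, h5, Pi.sub_apply, Pi.sub_apply, h2, h3, h6, Pi.smul_apply, Pi.smul_apply, h4,
    Pi.star_apply, Pi.star_apply, smul_eq_mul, smul_eq_mul, ← star_mul', ← star_sub, norm_star]

lemma integrable_mul_kernel_mul {k : ℝ → ℝ → ℂ} {φ : ℝ → ℝ} {f g : ℝ → ℂ}
    (hk : AEStronglyMeasurable (Function.uncurry k) (volume.prod volume)) (hφ : Integrable φ)
    (hkφ : ∀ x y, ‖k x y‖ ≤ φ (x - y)) (hf : MemLp f 2) (hg : MemLp g 2) :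
    Integrable (Function.uncurry fun x y => f x * (k x y * g y)) (volume.prod volume) := by
  have hgφ : Integrable (fun z : ℝ × ℝ => ‖g z.2‖ ^ 2 * φ (z.1 - z.2)) (volume.prod volume) :=
    (hg.integrable_norm_pow two_ne_zero).convolution_integrand (ContinuousLinearMap.mul ℝ ℝ) hφ
  have hfφ : Integrable (fun z : ℝ × ℝ => ‖f z.1‖ ^ 2 * φ (z.1 - z.2)) (volume.prod volume) := by
    have := ((hf.integrable_norm_pow two_ne_zero).convolution_integrand
      (ContinuousLinearMap.mul ℝ ℝ) hφ.comp_neg).swap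
    simpa [Function.comp_def] using this
  refine (hfφ.add hgφ).mono' (hf.1.comp_fst.mul (hk.mul hg.1.comp_snd)) (.of_forall fun z => ?_)
  have hφ0 : 0 ≤ φ (z.1 - z.2) := (norm_nonneg _).trans (hkφ z.1 z.2)
  calc ‖f z.1 * (k z.1 z.2 * g z.2)‖ ≤ ‖f z.1‖ * (φ (z.1 - z.2) * ‖g z.2‖) := by
        rw [norm_mul, norm_mul]
        gcongr
        exact hkφ z.1 z.2
    _ ≤ (‖f z.1‖ ^ 2 + ‖g z.2‖ ^ 2) * φ (z.1 - z.2) := by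
        nlinarith [mul_nonneg hφ0 (sq_nonneg (‖f z.1‖ - ‖g z.2‖)),
          mul_nonneg hφ0 (sq_nonneg (‖f z.1‖)), mul_nonneg hφ0 (sq_nonneg (‖g z.2‖))]
    _ = _ := add_mul _ _ _

lemma IsKerOp.adjoint_star_eq_star {k : ℝ → ℝ → ℂ} {K : Hsp →L[ℂ] Hsp} (hK : IsKerOp k K)
    (hk : ∀ x y, k x y = k y x)
    (hint : ∀ f g : Hsp, Integrable
      (Function.uncurry fun x y => (f : ℝ → ℂ) x * (k x y * (g : ℝ → ℂ) y))
      (volume.prod volume)) (f : Hsp) :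
    ContinuousLinearMap.adjoint K (star f) = star (K f) := by
  refine ext_inner_right ℂ fun g => ?_
  rw [ContinuousLinearMap.adjoint_inner_left, L2.inner_def, L2.inner_def]
  calc ∫ x : ℝ, inner ℂ ((star f : Hsp) x) (K g x)
      = ∫ x : ℝ, ∫ y : ℝ, (f : ℝ → ℂ) x * (k x y * (g : ℝ → ℂ) y) := by
        refine integral_congr_ae ?_
        filter_upwards [Lp.coeFn_star f, hK g] with x hfx hKx
        rw [hKx, hfx, Pi.star_apply, RCLike.inner_apply', RCLike.star_def, RCLike.conj_conj,
          integral_const_mul]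
    _ = ∫ y : ℝ, ∫ x : ℝ, (f : ℝ → ℂ) x * (k x y * (g : ℝ → ℂ) y) :=
        integral_integral_swap (hint f g)
    _ = ∫ y : ℝ, inner ℂ ((star (K f) : Hsp) y) (g y) := by
        refine integral_congr_ae ?_
        filter_upwards [Lp.coeFn_star (K f), hK f] with y hKfy hKy
        rw [hKfy, Pi.star_apply, RCLike.inner_apply', RCLike.star_def, RCLike.conj_conj, hKy,
          ← integral_mul_const]
        congr 1 with x
        rw [hk y x]
        ring

lemma star_eq_self_of_ae_eq_gaussF {α : ℝ} {g : Hsp}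
    (hg : ∀ᵐ x : ℝ, (g : ℝ → ℂ) x = gaussF α x) : star g = g := by
  refine Lp.ext ?_
  filter_upwards [Lp.coeFn_star g, hg] with x hstar hgx
  rw [hstar, Pi.star_apply, hgx, star_gaussF]

lemma gaussKernel_comm (w : ℂ) (e : ℝ → ℂ) (x y : ℝ) :
    gaussKernel w e x y = gaussKernel w e y x := by
  rw [gaussKernel, gaussKernel, ← neg_sub y x, ofReal_neg, neg_sq]
  ring

lemma norm_gaussKernel_le {e : ℝ → ℂ} (he : ∀ x, ‖e x‖ ≤ 1) (w : ℂ) (x y : ℝ) :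
    ‖gaussKernel w e x y‖ ≤ rexp (-w.re * (x - y) ^ 2) := by
  rw [gaussKernel, norm_mul, norm_mul, norm_cexp_neg_mul_sq]
  calc _ ≤ 1 * rexp (-w.re * (x - y) ^ 2) * 1 := by
        gcongr
        exacts [he x, he y]
    _ = _ := by ring

lemma continuous_uncurry_gaussKernel {e : ℝ → ℂ} (he : Continuous e) (w : ℂ) :
    Continuous (Function.uncurry (gaussKernel w e)) := by
  unfold Function.uncurry gaussKernel
  fun_prop

lemma IsKerOp.adjoint_gaussKernel_apply {w : ℂ} {e : ℝ → ℂ} {K : Hsp →L[ℂ] Hsp} {α : ℝ} {g : Hsp}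
    (hK : IsKerOp (gaussKernel w e) K) (hw : 0 < w.re) (he : Continuous e) (he1 : ∀ x, ‖e x‖ ≤ 1)
    (hg : ∀ᵐ x : ℝ, (g : ℝ → ℂ) x = gaussF α x) :
    ContinuousLinearMap.adjoint K g = star (K g) := by
  conv_lhs => rw [← star_eq_self_of_ae_eq_gaussF hg]
  exact hK.adjoint_star_eq_star (gaussKernel_comm w e) (fun u v => integrable_mul_kernel_mul
    (continuous_uncurry_gaussKernel he w).aestronglyMeasurable (integrable_exp_neg_mul_sq hw)
    (norm_gaussKernel_le he1 w) (Lp.memLp u) (Lp.memLp v)) g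

namespace IsGroundScale

variable {w b : ℂ} {α M : ℝ} {e : ℝ → ℂ} {K : Hsp →L[ℂ] Hsp} {g : Hsp}

lemma norm_apply_sub_smul_le (h : IsGroundScale w b α) (he : IsAlmostGaussian b M e)
    (hK : IsKerOp (gaussKernel w e) K) (hg : ∀ᵐ x : ℝ, (g : ℝ → ℂ) x = gaussF α x) :
    ‖K g - groundEigenvalue w b α • g‖ ≤
      √2 * (√(π / w.re) * (2 * (M * √(6 / α ^ 3)) + ‖b‖ / w.re)) := by
  have hα := h.pos
  refine norm_le_of_ae_norm_le_mul_norm_gaussF (β := α / 4) (by positivity) ?_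
  filter_upwards [Lp.coeFn_sub (K g) (groundEigenvalue w b α • g),
    Lp.coeFn_smul (groundEigenvalue w b α) g, hK g, hg] with x hsub hsmul hKx hgx
  set N := (2 * α / π) ^ (1 / 4 : ℝ)
  have hKg : K g x = N * ∫ y : ℝ, gaussKernel w e x y * cexp (-α * y ^ 2) := by
    rw [hKx, ← integral_const_mul]
    refine integral_congr_ae ?_
    filter_upwards [hg] with y hy
    rw [hy, gaussF]
    ring
  have hsqrt : (α / (α / 4)) ^ (1 / 4 : ℝ) = √2 := by
    rw [div_div_cancel₀ hα.ne', Real.sqrt_eq_rpow, show (4 : ℝ) = 2 ^ (2 : ℝ) by norm_num,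
      ← Real.rpow_mul zero_le_two]
    norm_num
  rw [hsub, Pi.sub_apply, hsmul, Pi.smul_apply, smul_eq_mul, hKg, hgx, gaussF, mul_left_comm,
    ← mul_sub, norm_mul, norm_real, norm_of_nonneg (by positivity)]
  calc _ ≤ N * (√(π / w.re) * (2 * (M * √(6 / α ^ 3)) + ‖b‖ / w.re) * rexp (-(α / 4) * x ^ 2)) := by
        gcongr
        exact h.norm_integral_gaussKernel_sub_le he x
    _ = √(π / w.re) * (2 * (M * √(6 / α ^ 3)) + ‖b‖ / w.re) * (N * rexp (-(α / 4) * x ^ 2)) := by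
        ring
    _ = _ := by
        rw [rpow_mul_exp_eq_mul_norm_gaussF hα.le (by positivity), hsqrt]
        ring

lemma norm_projP_apply_le (h : IsGroundScale w b α) (he : IsAlmostGaussian b M e)
    (hK : IsKerOp (gaussKernel w e) K) (hg : ∀ᵐ x : ℝ, (g : ℝ → ℂ) x = gaussF α x) :
    ‖projP g (K g)‖ ≤ √2 * (√(π / w.re) * (2 * (M * √(6 / α ^ 3)) + ‖b‖ / w.re)) :=
  (norm_projP_le_norm_sub_smul (norm_eq_one_of_ae_eq_gaussF h.pos hg) _ _).trans
    (h.norm_apply_sub_smul_le he hK hg)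

lemma norm_projP_adjoint_apply_le (h : IsGroundScale w b α) (he : IsAlmostGaussian b M e)
    (hK : IsKerOp (gaussKernel w e) K) (hg : ∀ᵐ x : ℝ, (g : ℝ → ℂ) x = gaussF α x) :
    ‖projP g (ContinuousLinearMap.adjoint K g)‖ ≤
      √2 * (√(π / w.re) * (2 * (M * √(6 / α ^ 3)) + ‖b‖ / w.re)) := calc
  _ ≤ ‖star (K g) - star (groundEigenvalue w b α) • g‖ := by
    rw [hK.adjoint_gaussKernel_apply h.re_pos he.continuous he.norm_le_one hg]
    exact norm_projP_le_norm_sub_smul (norm_eq_one_of_ae_eq_gaussF h.pos hg) _ _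
  _ = ‖K g - groundEigenvalue w b α • g‖ := by
    rw [← norm_star_sub_star_smul_star (K g), star_eq_self_of_ae_eq_gaussF hg]
  _ ≤ _ := h.norm_apply_sub_smul_le he hK hg

end IsGroundScale

/-! ### Semiclassical regime -/

lemma kerK_eq_gaussKernel (W : ℝ) (ζ : ℂ) (U : ℝ → ℂ) :
    kerK W ζ U = gaussKernel (W ^ 2 * ζ ^ 2) fun x => cexp (-(U x / 2)) := by
  funext x y
  rw [kerK, gaussKernel, ← Complex.exp_add, ← Complex.exp_add, ofReal_sub]
  ring_nf

lemma sqrt_div_cube_le_mul_rpow {k s W a : ℝ} (hk : 0 ≤ k) (hs : 0 < s) (hW : 0 < W)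
    (ha : s * W ≤ a) : √(k / a ^ 3) ≤ √(k / s ^ 3) * W ^ (-(3 / 2) : ℝ) := calc
  √(k / a ^ 3) ≤ √(k / (s * W) ^ 3) := by gcongr
  _ = √(k / s ^ 3 * (W ^ 3)⁻¹) := by rw [mul_pow, ← div_div, div_eq_mul_inv (k / s ^ 3)]
  _ = √(k / s ^ 3) * W ^ (-(3 / 2) : ℝ) := by
    rw [Real.sqrt_mul (by positivity), Real.sqrt_inv, Real.rpow_neg hW.le,
      Real.sqrt_eq_rpow (W ^ 3), ← Real.rpow_natCast_mul hW.le]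
    norm_num

lemma div_le_div_mul_rpow {σ B W m r : ℝ} (hσ : 0 < σ) (hB : 0 ≤ B) (hW : 1 ≤ W) (hm : m ≤ B)
    (hr : σ * W ^ 2 ≤ r) : m / r ≤ B / σ * W ^ (-(3 / 2) : ℝ) := calc
  m / r ≤ B / (σ * W ^ 2) := div_le_div₀ hB hm (by positivity) hr
  _ = B / σ * W ^ (-2 : ℝ) := by
    rw [Real.rpow_neg (by positivity), Real.rpow_two]
    field_simp
  _ ≤ B / σ * W ^ (-(3 / 2) : ℝ) := by
    gcongr 1
    exact Real.rpow_le_rpow_of_exponent_le hW (by norm_num)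

namespace UHyp

variable {C c γ W : ℝ} {ζ : ℂ} {U : ℝ → ℂ}

lemma isAlmostGaussian (h : UHyp C c γ ζ U) (hC : 0 < C) (hc : 0 < c) :
    IsAlmostGaussian (deriv (deriv U) 0 / 4) (16 / analyticRadius C c ^ 3)
      fun x => cexp (-(U x / 2)) where
  continuous := by
    have := h.hU1smooth.continuous
    fun_prop
  norm_le_one x := norm_cexp_le_one_of_re_nonpos (h.re_neg_half_nonpos hC x)
  norm_sub_le := h.norm_cexp_sub_cexp_quadratic_le hC hc

lemma alph_eq (h : UHyp C c γ ζ U) : alph W ζ U = W * √(‖deriv (deriv U) 0‖ / 2) := by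
  rw [alph, h.zeta_sq_mul_deriv_deriv, ofReal_re]

lemma sqrt_le_sqrt_norm_deriv_deriv_div_two (h : UHyp C c γ ζ U) (hC : 0 < C) (hc : 0 < c) :
    √(1 / C) ≤ √(‖deriv (deriv U) 0‖ / 2) := by
  refine Real.sqrt_le_sqrt ?_
  have hle := (h.two_div_le_re_deriv_deriv hC hc).trans (re_le_norm _)
  rw [le_div_iff₀ two_pos]
  calc 1 / C * 2 = 2 / C := by ring
    _ ≤ _ := hle

lemma sqrt_norm_deriv_deriv_div_two_le (h : UHyp C c γ ζ U) (hC : 0 < C) (hc : 0 < c) :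
    √(‖deriv (deriv U) 0‖ / 2) ≤ 1 / analyticRadius C c := by
  have hR := analyticRadius_pos hC hc
  refine Real.sqrt_le_iff.2 ⟨by positivity, ?_⟩
  calc ‖deriv (deriv U) 0‖ / 2 ≤ 2 / analyticRadius C c ^ 2 / 2 := by
        gcongr
        exact h.norm_deriv_deriv_le hC hc
    _ = _ := by ring

lemma mul_sq_le_re (h : UHyp C c γ ζ U) (hC : 0 < C) (hc : 0 < c) (W : ℝ) :
    analyticRadius C c ^ 2 / C * W ^ 2 ≤ ((W : ℂ) ^ 2 * ζ ^ 2).re := by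
  rw [← ofReal_pow, re_ofReal_mul, mul_comm]
  gcongr
  exact h.div_le_re_zeta_sq hC hc

lemma isGroundScale (h : UHyp C c γ ζ U) (hC : 0 < C) (hc : 0 < c)
    (hW : 4 / analyticRadius C c ≤ W) (hW' : C / analyticRadius C c ^ 3 ≤ W) :
    IsGroundScale (W ^ 2 * ζ ^ 2) (deriv (deriv U) 0 / 4) (alph W ζ U) := by
  have hR := analyticRadius_pos hC hc
  have hW0 : 0 < W := (by positivity : 0 < 4 / analyticRadius C c).trans_le hW
  have hle := h.sqrt_norm_deriv_deriv_div_two_le hC hc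
  have hpos : 0 < √(‖deriv (deriv U) 0‖ / 2) :=
    (Real.sqrt_pos.2 (by positivity)).trans_le (h.sqrt_le_sqrt_norm_deriv_deriv_div_two hC hc)
  have hsq : √(‖deriv (deriv U) 0‖ / 2) ^ 2 = ‖deriv (deriv U) 0‖ / 2 :=
    Real.sq_sqrt (by positivity)
  rw [h.alph_eq]
  refine ⟨by positivity, ?_, ?_, ?_⟩
  · calc W * √(‖deriv (deriv U) 0‖ / 2) ≤ W * (1 / analyticRadius C c) := by gcongr
      _ = analyticRadius C c ^ 2 / C * W * (C / analyticRadius C c ^ 3) := by field_simp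
      _ ≤ analyticRadius C c ^ 2 / C * W * W := by gcongr
      _ ≤ _ := by rw [mul_assoc, ← sq]; exact h.mul_sq_le_re hC hc W
  · calc 8 * ‖deriv (deriv U) 0 / 4‖ = 4 * (‖deriv (deriv U) 0‖ / 2) := by
          rw [norm_div, Complex.norm_ofNat]; ring
      _ = 4 * √(‖deriv (deriv U) 0‖ / 2) * √(‖deriv (deriv U) 0‖ / 2) := by
          rw [mul_assoc, ← sq, hsq]
      _ ≤ 4 * (1 / analyticRadius C c) * √(‖deriv (deriv U) 0‖ / 2) := by gcongr
      _ ≤ W * √(‖deriv (deriv U) 0‖ / 2) := by rw [mul_one_div]; gcongr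
  · rw [ofReal_mul, mul_pow, ← ofReal_pow (√_), hsq, ofReal_div, ← h.zeta_sq_mul_deriv_deriv,
      ofReal_ofNat]
    ring

lemma sqrt_pi_div_re_le (h : UHyp C c γ ζ U) (hC : 0 < C) (hc : 0 < c) {b : ℂ}
    (hα : IsGroundScale (W ^ 2 * ζ ^ 2) b (alph W ζ U)) :
    √(π / ((W : ℂ) ^ 2 * ζ ^ 2).re) ≤ √(2 * C / analyticRadius C c ^ 2) * ‖muK W ζ U‖ := by
  have hR := analyticRadius_pos hC hc
  have hnorm : ‖(W : ℂ) ^ 2 * ζ ^ 2‖ = W ^ 2 := by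
    rw [norm_mul, h.norm_zeta_sq, mul_one, ← ofReal_pow, norm_real, norm_of_nonneg (sq_nonneg W)]
  have hre : ((W : ℂ) ^ 2 * ζ ^ 2).re ≤ W ^ 2 := (re_le_norm _).trans hnorm.le
  have hne : 0 < ‖(W : ℂ) ^ 2 * ζ ^ 2 + alph W ζ U‖ := by
    refine lt_of_lt_of_le ?_ (re_le_norm _)
    rw [add_re, ofReal_re]
    linarith [hα.re_pos, hα.pos]
  have hle : ‖(W : ℂ) ^ 2 * ζ ^ 2 + alph W ζ U‖ ≤ 2 * W ^ 2 := by
    refine (norm_add_le _ _).trans ?_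
    rw [hnorm, norm_real, norm_of_nonneg hα.pos.le]
    linarith [hα.le_re]
  have hW : 0 < W ^ 2 := hα.re_pos.trans_le hre
  rw [muK, norm_cpow_one_half, ← Real.sqrt_mul (by positivity), norm_div, norm_real,
    norm_of_nonneg pi_pos.le]
  refine Real.sqrt_le_sqrt ?_
  calc π / ((W : ℂ) ^ 2 * ζ ^ 2).re ≤ π / (analyticRadius C c ^ 2 / C * W ^ 2) := by
        gcongr
        exact h.mul_sq_le_re hC hc W
    _ = 2 * C / analyticRadius C c ^ 2 * (π / (2 * W ^ 2)) := by field_simp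
    _ ≤ _ := by gcongr

lemma ground_error_le (h : UHyp C c γ ζ U) (hC : 0 < C) (hc : 0 < c) (hW : 1 ≤ W) :
    2 * (16 / analyticRadius C c ^ 3 * √(6 / alph W ζ U ^ 3)) +
        ‖deriv (deriv U) 0 / 4‖ / ((W : ℂ) ^ 2 * ζ ^ 2).re ≤
      (2 * (16 / analyticRadius C c ^ 3 * √(6 / √(1 / C) ^ 3)) +
        2 / analyticRadius C c ^ 2 / 4 / (analyticRadius C c ^ 2 / C)) * W ^ (-(3 / 2) : ℝ) := by
  have hR := analyticRadius_pos hC hc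
  have hb : ‖deriv (deriv U) 0 / 4‖ ≤ 2 / analyticRadius C c ^ 2 / 4 := by
    rw [norm_div, Complex.norm_ofNat]
    gcongr
    exact h.norm_deriv_deriv_le hC hc
  have hα : √(1 / C) * W ≤ alph W ζ U := by
    rw [h.alph_eq, mul_comm]
    exact mul_le_mul_of_nonneg_left (h.sqrt_le_sqrt_norm_deriv_deriv_div_two hC hc) (by linarith)
  have hcubic := sqrt_div_cube_le_mul_rpow (k := 6) (by norm_num) (by positivity) (by linarith) hα
  have hquartic := div_le_div_mul_rpow (by positivity) (by positivity) hW hb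
    (h.mul_sq_le_re hC hc W)
  calc _ ≤ 2 * (16 / analyticRadius C c ^ 3 * (√(6 / √(1 / C) ^ 3) * W ^ (-(3 / 2) : ℝ))) +
        2 / analyticRadius C c ^ 2 / 4 / (analyticRadius C c ^ 2 / C) * W ^ (-(3 / 2) : ℝ) := by
        gcongr
    _ = _ := by ring

end UHyp

theorem stmt_1_general (C c : ℝ) (hC : 0 < C) (hc : 0 < c) :
    ∃ C' : ℝ, 0 < C' ∧ ∃ W₀ : ℝ, 0 < W₀ ∧
    ∀ (γ W : ℝ) (ζ : ℂ) (U : ℝ → ℂ), W₀ ≤ W → UHyp C c γ ζ U →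
    ∀ K : Hsp →L[ℂ] Hsp, IsKerOp (kerK W ζ U) K →
    ∀ g : Hsp, (∀ᵐ x : ℝ, (g : ℝ → ℂ) x = gaussF (alph W ζ U) x) →
    ‖projP g (K g)‖ ≤ C' * W ^ (-(3 / 2) : ℝ) * ‖muK W ζ U‖ ∧
    ‖projP g (ContinuousLinearMap.adjoint K g)‖ ≤ C' * W ^ (-(3 / 2) : ℝ) * ‖muK W ζ U‖ := by
  set R := analyticRadius C c
  have hR : 0 < R := analyticRadius_pos hC hc
  set D := 2 * (16 / R ^ 3 * √(6 / √(1 / C) ^ 3)) + 2 / R ^ 2 / 4 / (R ^ 2 / C)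
  refine ⟨√2 * (√(2 * C / R ^ 2) * D), by positivity, max 1 (max (4 / R) (C / R ^ 3)),
    by positivity, fun γ W ζ U hW hU K hK g hg => ?_⟩
  obtain ⟨hW1, hWR, hWC⟩ : 1 ≤ W ∧ 4 / R ≤ W ∧ C / R ^ 3 ≤ W := by
    simpa only [max_le_iff] using hW
  rw [kerK_eq_gaussKernel] at hK
  have hground := hU.isGroundScale hC hc hWR hWC
  have hgauss := hU.isAlmostGaussian hC hc
  have hconst : √2 * (√(π / ((W : ℂ) ^ 2 * ζ ^ 2).re) *
        (2 * (16 / R ^ 3 * √(6 / alph W ζ U ^ 3)) +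
          ‖deriv (deriv U) 0 / 4‖ / ((W : ℂ) ^ 2 * ζ ^ 2).re)) ≤
      √2 * (√(2 * C / R ^ 2) * D) * W ^ (-(3 / 2) : ℝ) * ‖muK W ζ U‖ := calc
    _ ≤ √2 * (√(2 * C / R ^ 2) * ‖muK W ζ U‖ * (D * W ^ (-(3 / 2) : ℝ))) := by
      gcongr
      · have := hground.pos; have := hground.re_pos; positivity
      · exact hU.sqrt_pi_div_re_le hC hc hground
      · exact hU.ground_error_le hC hc hW1
    _ = _ := by ring
  exact ⟨(hground.norm_projP_apply_le hgauss hK hg).trans hconst,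
    (hground.norm_projP_adjoint_apply_le hgauss hK hg).trans hconst⟩

/-- the off-diagonal blocks of the normalized operator `μ⁻¹K` are
`O(W^{−1−δ})`: namely `‖P K g_α‖ ≤ C'·W^{−1−δ}·|μ|` and `‖P K* g_α‖ ≤ C'·W^{−1−δ}·|μ|`. -/
theorem stmt_1 :
    ∀ (C c γ : ℝ), 1 ≤ C → 0 < c → 1 < γ →
    ∃ δ : ℝ, 0 < δ ∧ ∃ C' : ℝ, 0 < C' ∧ ∃ W₀ : ℝ, 0 < W₀ ∧
    ∀ (W : ℝ) (ζ : ℂ) (U : ℝ → ℂ), W₀ ≤ W → UHyp C c γ ζ U →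
    ∀ K : Hsp →L[ℂ] Hsp, IsKerOp (kerK W ζ U) K →
    ∀ g : Hsp, (∀ᵐ x : ℝ, (g : ℝ → ℂ) x = gaussF (alph W ζ U) x) →
    ‖projP g (K g)‖ ≤ C' * W ^ (-1 - δ) * ‖muK W ζ U‖ ∧
    ‖projP g (ContinuousLinearMap.adjoint K g)‖ ≤ C' * W ^ (-1 - δ) * ‖muK W ζ U‖ := by
  intro C c γ hC hc _
  obtain ⟨C', hC', W₀, hW₀, hmain⟩ := stmt_1_general C c (one_pos.trans_le hC) hc
  refine ⟨1 / 2, by norm_num, C', hC', W₀, hW₀, ?_⟩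
  rw [show (-1 - 1 / 2 : ℝ) = -(3 / 2) by norm_num]
  exact hmain γ
end

section
/- The set of nonzero spectral values of the compact operator K_hr on L²(ℝ) equals {λ_j^hr : j ∈ ℕ}, where λ_j^hr = √(π/(W²ζ² + α_hr + (a+ib)/2)) · (W²ζ²/(W²ζ² + α_hr + (a+ib)/2))^j (principal square root). In particular the Gaussian g_{α_hr}(x) = (2α_hr/π)^{1/4}·exp(−α_hr·x²) is an eigenfunction of K_hr with eigenvalue λ₀^hr = √(π/(W²ζ² + α_hr + (a+ib)/2)). -/
open MeasureTheory Complex Real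
open scoped ComplexInnerProductSpace

noncomputable section

/-- The harmonic-oscillator kernel
`K_hr(x,y) = exp(−W²ζ²(x−y)² − ((a+ib)/2)(x²+y²))`. -/
def kerHr (W : ℝ) (ζ : ℂ) (a b : ℝ) (x y : ℝ) : ℂ :=
  Complex.exp (-(W : ℂ)^2 * ζ^2 * ((x : ℂ) - (y : ℂ))^2
    - (((a : ℂ) + (b : ℂ) * Complex.I) / 2) * ((x : ℂ)^2 + (y : ℂ)^2))

/-- The eigenvalues `λ_j^hr` of the harmonic oscillator (principal square root). -/
def lamHr (W : ℝ) (ζ : ℂ) (a b : ℝ) (αhr : ℂ) (j : ℕ) : ℂ :=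
  ((π : ℂ) / ((W : ℂ)^2 * ζ^2 + αhr + ((a : ℂ) + (b : ℂ) * Complex.I) / 2)) ^ (1/2 : ℂ) *
    (((W : ℂ)^2 * ζ^2) / ((W : ℂ)^2 * ζ^2 + αhr + ((a : ℂ) + (b : ℂ) * Complex.I) / 2)) ^ j

/-- The squared singular values `(s_j^hr)²` of the harmonic oscillator, where
`A = 2W²·Re ζ² + a`. -/
def ssqHr (W a A : ℝ) (j : ℕ) : ℝ :=
  Real.sqrt (π^2 / (W^4 + 2*a*A + Real.sqrt ((2*W^4 + a*A) * (a*A)))) *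
    (W^4 / (W^4 + 2*a*A + Real.sqrt ((2*W^4 + a*A) * (a*A)))) ^ j

/-- The (complex) Gaussian `g_α(x) = (2α/π)^{1/4}·exp(−αx²)`, principal branch. -/
def gaussC (α : ℂ) (x : ℝ) : ℂ :=
  (2 * α / (π : ℂ)) ^ (1/4 : ℂ) * Complex.exp (-α * (x : ℂ)^2)

end

/-!
The Gaussian `exp(−αx²)` times the `n`-th Hermite polynomial of the weight `exp(−2αx²)` is an
eigenfunction: integrating by parts against `exp(−βy² + 2βqxy)` with `2α = β(1 − q²)` yields the
three-term recurrence of the Hermite polynomials multiplied by `q`. The eigenfunctions are total,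
because for `f ∈ L²` orthogonal to all of them the function `f(x) exp(−ᾱx²)` has vanishing moments;
it decays so fast that its Fourier transform is given by its moments, and hence it vanishes.

The operator need not be normal, so totality alone does not determine its spectrum. It is compact,
however, and so is its adjoint: a further nonzero spectral value would be the conjugate of an
eigenvalue of the adjoint, whose eigenvector is orthogonal to all the eigenfunctions.
-/

open Filter Polynomial Topology
open scoped FourierTransform InnerProduct

section CompactOperators

variable {𝕜 E F : Type*} [RCLike 𝕜]
  [NormedAddCommGroup E] [InnerProductSpace 𝕜 E] [CompleteSpace E]
  [NormedAddCommGroup F]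

theorem isCompactOperator_adjoint [InnerProductSpace 𝕜 F] [CompleteSpace F] {T : E →L[𝕜] F}
    (hT : IsCompactOperator T) : IsCompactOperator (T†) := by
  suffices h : TotallyBounded ((T†) '' Metric.closedBall 0 1) from
    (isCompactOperator_iff_isCompact_closure_image_closedBall (T† : F →ₗ[𝕜] E) one_pos).2
      (h.closure.isCompact_of_isClosed isClosed_closure)
  have hTT : TotallyBounded ((T ∘L T†) '' Metric.closedBall 0 1) :=
    ((hT.comp_clm (T†)).isCompact_closure_image_closedBall 1).totallyBounded.subset subset_closure
  have hnorm (x : F) : ‖(T†) x‖ ^ 2 ≤ ‖T ((T†) x)‖ * ‖x‖ := by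
    simpa using (ContinuousLinearMap.apply_norm_sq_eq_inner_adjoint_left (T†) x).trans_le
      (re_inner_le_norm _ _)
  refine Metric.totallyBounded_iff.2 fun ε hε => ?_
  obtain ⟨t, ht, htfin, hcover⟩ :=
    Metric.finite_approx_of_totallyBounded hTT (ε ^ 2 / 2) (by positivity)
  obtain ⟨_, hu, hufin, rfl⟩ := Set.exists_subset_image_finite_and.1 ⟨t, ht, htfin, rfl⟩
  refine ⟨_, hufin.image (T†), ?_⟩
  rintro _ ⟨x, hx, rfl⟩
  obtain ⟨_, ⟨y, hy, rfl⟩, hxy⟩ := Set.mem_iUnion₂.1 (hcover (Set.mem_image_of_mem _ hx))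
  refine Set.mem_biUnion (Set.mem_image_of_mem _ hy) (mem_ball_iff_norm.2 ?_)
  have hxy' : ‖T ((T†) (x - y))‖ < ε ^ 2 / 2 := by simpa [dist_eq_norm] using hxy
  have hle : ‖x - y‖ ≤ 2 := by
    have hx1 : ‖x‖ ≤ 1 := by simpa using hx
    have hy1 : ‖y‖ ≤ 1 := by simpa using hu hy
    linarith [norm_sub_le x y]
  rw [← map_sub]
  refine lt_of_pow_lt_pow_left₀ 2 hε.le ?_
  calc ‖(T†) (x - y)‖ ^ 2 ≤ ‖T ((T†) (x - y))‖ * ‖x - y‖ := hnorm _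
    _ ≤ ‖T ((T†) (x - y))‖ * 2 := by gcongr
    _ < ε ^ 2 := by linarith

theorem isCompactOperator_of_tendsto_zero [TopologicalSpace.SeparableSpace E] [NormedSpace 𝕜 F]
    {T : E →L[𝕜] F}
    (hT : ∀ (v : ℕ → E) (C : ℝ), (∀ n, ‖v n‖ ≤ C) →
      (∀ w, Tendsto (fun n => inner 𝕜 w (v n)) atTop (𝓝 0)) →
      Tendsto (fun n => T (v n)) atTop (𝓝 0)) : IsCompactOperator T := by
  refine (isCompactOperator_iff_image_closedBall_subset_compact (T : E →ₗ[𝕜] F) one_pos).2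
    ⟨T '' Metric.closedBall 0 1, IsSeqCompact.isCompact fun u hu => ?_, subset_rfl⟩
  choose v hv hvu using hu
  obtain ⟨ℓ, hℓ, φ, hφ, hlim⟩ := WeakDual.isSeqCompact_closedBall 𝕜 E 0 1
    (x := fun n => StrongDual.toWeakDual (InnerProductSpace.toDual 𝕜 E (v n)))
    (fun n => by simpa using hv n)
  obtain ⟨f, rfl⟩ : ∃ f, ℓ = StrongDual.toWeakDual (InnerProductSpace.toDual 𝕜 E f) :=
    ⟨(InnerProductSpace.toDual 𝕜 E).symm (WeakDual.toStrongDual ℓ), by simp⟩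
  have hv1 : ∀ n, ‖v n‖ ≤ 1 := fun n => by simpa using hv n
  have hf1 : ‖f‖ ≤ 1 := by simpa using hℓ
  have hweak (w : E) : Tendsto (fun n => inner 𝕜 w (v (φ n) - f)) atTop (𝓝 0) := by
    have h : Tendsto (fun n => inner 𝕜 (v (φ n)) w) atTop (𝓝 (inner 𝕜 f w)) :=
      ((WeakDual.eval_continuous w).tendsto _).comp hlim
    simpa [inner_sub_right] using h.star.sub_const (inner 𝕜 w f)
  refine ⟨T f, ⟨f, by simpa using hf1, rfl⟩, φ, hφ, ?_⟩
  have hT0 := hT (fun n => v (φ n) - f) (1 + 1)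
    (fun n => (norm_sub_le _ _).trans (add_le_add (hv1 _) hf1)) hweak
  simpa [hvu, tendsto_sub_nhds_zero_iff, Function.comp_def] using hT0

theorem isCompactOperator_of_ae_eq_inner {X : Type*} [MeasurableSpace X] {μ : Measure X}
    [TopologicalSpace.SeparableSpace E]
    {T : E →L[𝕜] Lp 𝕜 2 μ} {h : X → E} {g : X → ℝ} (hg : MemLp g 2 μ) (hhg : ∀ x, ‖h x‖ ≤ g x)
    (hT : ∀ f, ∀ᵐ x ∂μ, T f x = inner 𝕜 (h x) f) : IsCompactOperator T := by
  refine isCompactOperator_of_tendsto_zero fun v C hC hv => ?_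
  have hnorm_sq (n : ℕ) : ∫ x, ‖T (v n) x‖ ^ 2 ∂μ = ‖T (v n)‖ ^ 2 := by
    rw [← inner_self_eq_norm_sq (𝕜 := 𝕜), L2.inner_def, ← integral_re (L2.integrable_inner _ _)]
    simp only [inner_self_eq_norm_sq]
  have hlim : Tendsto (fun n => ∫ x, ‖T (v n) x‖ ^ 2 ∂μ) atTop (𝓝 (∫ _, 0 ∂μ)) := by
    refine tendsto_integral_of_dominated_convergence (fun x => (g x * C) ^ 2)
      (fun n => (Lp.aestronglyMeasurable _).norm.pow 2) (hg.mul_const C).integrable_sq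
      (fun n => ?_) ?_
    · filter_upwards [hT (v n)] with x hx
      rw [hx, Real.norm_of_nonneg (by positivity)]
      gcongr
      exact (norm_inner_le_norm _ _).trans
        (mul_le_mul (hhg x) (hC n) (norm_nonneg _) ((norm_nonneg _).trans (hhg x)))
    · filter_upwards [ae_all_iff.2 fun n => hT (v n)] with x hx
      simpa [hx] using (hv (h x)).norm.pow 2
  simp only [hnorm_sq, integral_zero] at hlim
  exact tendsto_zero_iff_norm_tendsto_zero.2 (by simpa using hlim.sqrt)

theorem spectrum_diff_zero_eq_range_diff_zero {T : E →L[𝕜] E} (hT : IsCompactOperator T)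
    {ι : Type*} {v : ι → E} {d : ι → 𝕜} (hv : ∀ i, v i ≠ 0) (hTv : ∀ i, T (v i) = d i • v i)
    (hspan : (Submodule.span 𝕜 (Set.range v))ᗮ = ⊥) :
    spectrum 𝕜 T \ {0} = Set.range d \ {0} := by
  refine Set.Subset.antisymm (fun μ ⟨hμ, hμ0⟩ => ⟨?_, hμ0⟩) ?_
  · have hμ' : star μ ∈ spectrum 𝕜 (T†) := by
      rw [← ContinuousLinearMap.star_eq_adjoint, spectrum.map_star]
      simpa using hμ
    obtain ⟨f, hf⟩ := (((isCompactOperator_adjoint hT).hasEigenvalue_iff_mem_spectrum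
      (star_ne_zero.2 hμ0)).2 hμ').exists_hasEigenvector
    have hTf : (T†) f = star μ • f := hf.apply_eq_smul
    by_contra hne
    have hortho (i : ι) : inner 𝕜 f (v i) = 0 := by
      have h : μ * inner 𝕜 f (v i) = d i * inner 𝕜 f (v i) := by
        simpa [hTf, hTv, inner_smul_left, inner_smul_right] using
          ContinuousLinearMap.adjoint_inner_left T (v i) f
      exact (mul_eq_mul_right_iff.1 h).resolve_left fun hi => hne ⟨i, hi.symm⟩
    have hf_mem : f ∈ (Submodule.span 𝕜 (Set.range v))ᗮ :=
      Submodule.isOrtho_iff_le.1 (Submodule.isOrtho_span.2 (by simpa using hortho))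
        (Submodule.mem_span_singleton_self f)
    exact hf.2 ((Submodule.eq_bot_iff _).1 hspan f hf_mem)
  · rintro _ ⟨⟨i, rfl⟩, hi⟩
    refine ⟨(hT.hasEigenvalue_iff_mem_spectrum hi).1 ?_, hi⟩
    exact Module.End.hasEigenvalue_of_hasEigenvector
      (Module.End.hasEigenvector_iff.2 ⟨Module.End.mem_eigenspace_iff.2 (hTv i), hv i⟩)

end CompactOperators

section FourierUniqueness

variable {E : Type*} [NormedAddCommGroup E] [NormedSpace ℂ E]

theorem ae_eq_zero_of_fourier_eq_zero [CompleteSpace E] {V : Type*} [NormedAddCommGroup V]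
    [InnerProductSpace ℝ V] [FiniteDimensional ℝ V] [MeasurableSpace V] [BorelSpace V]
    {F : V → E} (hF : Integrable F) (h : 𝓕 F = 0) : F =ᵐ[volume] 0 := by
  refine ae_eq_zero_of_integral_contDiff_smul_eq_zero hF.locallyIntegrable
    fun g g_smooth g_cpt => ?_
  have hcpt : HasCompactSupport (ofRealCLM ∘ g) := g_cpt.comp_left rfl
  let ψ := hcpt.toSchwartzMap (ofRealCLM.contDiff.comp g_smooth)
  let φ : SchwartzMap V ℂ := 𝓕⁻ ψ
  calc ∫ x, g x • F x = ∫ x, (𝓕 φ) x • F x := by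
        simp [φ, ψ, FourierTransform.fourier_fourierInv_eq]
    _ = ∫ ξ, φ ξ • 𝓕 F ξ := by
        simp only [SchwartzMap.fourier_coe]
        simpa using! VectorFourier.integral_fourierIntegral_smul_eq_flip (L := innerₗ V)
          Real.continuous_fourierChar continuous_inner (φ.integrable (μ := volume)) hF
    _ = 0 := by simp [h]

theorem hasSum_integral_cexp_smul {F : ℝ → E} {w : ℂ}
    (hF : Integrable fun x => rexp (‖w‖ * |x|) • F x) :
    HasSum (fun n : ℕ => (w ^ n / n.factorial) • ∫ x : ℝ, (x : ℂ) ^ n • F x)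
      (∫ x : ℝ, cexp (w * x) • F x) := by
  have hmeas : AEStronglyMeasurable F := by
    refine ((by fun_prop : Continuous fun x : ℝ => rexp (-(‖w‖ * |x|))).aestronglyMeasurable.smul
      hF.1).congr (.of_forall fun x => ?_)
    simp [smul_smul, ← Real.exp_add]
  have hexp_real (x : ℝ) : HasSum (fun n : ℕ => (‖w‖ * |x|) ^ n / n.factorial * ‖F x‖)
      (rexp (‖w‖ * |x|) * ‖F x‖) := by
    refine HasSum.mul_right _ ?_
    rw [Real.exp_eq_exp_ℝ]
    exact NormedSpace.expSeries_div_hasSum_exp _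
  have hexp (x : ℝ) : HasSum (fun n : ℕ => ((w * x) ^ n / n.factorial) • F x)
      (cexp (w * x) • F x) := by
    refine HasSum.smul_const ?_ _
    rw [Complex.exp_eq_exp_ℂ]
    exact NormedSpace.expSeries_div_hasSum_exp _
  have hterm (n : ℕ) (x : ℝ) :
      (w ^ n / n.factorial) • (x : ℂ) ^ n • F x = ((w * x) ^ n / n.factorial) • F x := by
    rw [smul_smul, mul_pow, div_mul_eq_mul_div]
  simp only [← integral_smul, hterm]
  refine hasSum_integral_of_dominated_convergence
    (fun n x => (‖w‖ * |x|) ^ n / n.factorial * ‖F x‖) (fun n => ?_) (fun n => ?_)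
    (.of_forall fun x => (hexp_real x).summable) ?_ (.of_forall hexp)
  · exact (by fun_prop : Continuous fun x : ℝ =>
      (w * x) ^ n / (n.factorial : ℂ)).aestronglyMeasurable.smul hmeas
  · exact .of_forall fun x => by simp [norm_smul]
  · simpa only [(hexp_real _).tsum_eq, norm_smul, Real.norm_eq_abs, Real.abs_exp] using hF.norm

theorem ae_eq_zero_of_forall_integral_pow_smul_eq_zero [CompleteSpace E] {F : ℝ → E}
    (hF : ∀ r : ℝ, Integrable fun x => rexp (r * |x|) • F x)
    (h : ∀ n : ℕ, ∫ x : ℝ, (x : ℂ) ^ n • F x = 0) : F =ᵐ[volume] 0 := by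
  refine ae_eq_zero_of_fourier_eq_zero (by simpa using hF 0) (funext fun ξ => ?_)
  have hsum := hasSum_integral_cexp_smul (hF ‖(-2 * π * ξ * I : ℂ)‖)
  simp only [h, smul_zero] at hsum
  rw [fourier_real_eq_integral_exp_smul, Pi.zero_apply, ← hsum.unique hasSum_zero]
  congr! 3
  push_cast
  ring_nf

end FourierUniqueness

section GaussianDecay

variable {β : ℂ}

theorem integrable_exp_mul_abs_mul_norm_cexp_quadratic (hβ : 0 < β.re) (r : ℝ) (t : ℂ) :
    Integrable fun x : ℝ => rexp (r * |x|) * ‖cexp (-β * x ^ 2 + t * x)‖ := by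
  have hshift (r x : ℝ) : ‖cexp (-β * x ^ 2 + (t + r) * x + 0)‖ =
      rexp (r * x) * ‖cexp (-β * x ^ 2 + t * x)‖ := by
    rw [← Complex.norm_exp_ofReal, ← norm_mul, ← Complex.exp_add]
    push_cast
    ring_nf
  have hint (r : ℝ) : Integrable fun x : ℝ => rexp (r * x) * ‖cexp (-β * x ^ 2 + t * x)‖ := by
    simpa only [hshift] using (integrable_cexp_quadratic hβ (t + r) 0).norm
  refine ((hint r).add (hint (-r))).mono' (by fun_prop) (.of_forall fun x => ?_)
  have hexp : rexp (r * |x|) ≤ rexp (r * x) + rexp (-r * x) :=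
    calc rexp (r * |x|) ≤ rexp |r * x| := by
          rw [abs_mul]
          gcongr
          exact le_abs_self r
      _ ≤ rexp (r * x) + rexp (-r * x) := by simpa using Real.exp_abs_le (r * x)
  rw [Real.norm_of_nonneg (by positivity), Pi.add_apply, ← add_mul]
  gcongr

theorem memLp_exp_mul_abs_mul_norm_cexp (hβ : 0 < β.re) (r : ℝ) :
    MemLp (fun x : ℝ => rexp (r * |x|) * ‖cexp (-β * x ^ 2)‖) 2 := by
  rw [memLp_two_iff_integrable_sq (by fun_prop)]
  have h2β : 0 < (2 * β).re := by simpa using hβ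
  refine (integrable_exp_mul_abs_mul_norm_cexp_quadratic h2β (2 * r) 0).congr
    (.of_forall fun x => ?_)
  simp only [mul_pow]
  rw [← norm_pow, ← Real.exp_nat_mul, ← Complex.exp_nat_mul]
  push_cast
  ring_nf

theorem exists_norm_eval_le_mul_exp_norm {R : Type*} [NormedRing R] [NormOneClass R] (p : R[X]) :
    ∃ C, ∀ x : R, ‖p.eval x‖ ≤ C * rexp ‖x‖ := by
  induction p using Polynomial.induction_on' with
  | add p q hp hq =>
    obtain ⟨C, hC⟩ := hp
    obtain ⟨D, hD⟩ := hq
    refine ⟨C + D, fun x => ?_⟩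
    rw [eval_add, add_mul]
    exact norm_add_le_of_le (hC x) (hD x)
  | monomial n z =>
    refine ⟨‖z‖ * n.factorial, fun x => ?_⟩
    have hpow : ‖x‖ ^ n ≤ n.factorial * rexp ‖x‖ :=
      (div_le_iff₀' (by positivity)).1 (Real.pow_div_factorial_le_exp _ (norm_nonneg x) n)
    rw [eval_monomial, mul_assoc]
    exact (norm_mul_le _ _).trans (by gcongr; exact (norm_pow_le x n).trans hpow)

theorem integrable_eval_mul_cexp_quadratic (hβ : 0 < β.re) (t : ℂ) (p : ℂ[X]) :
    Integrable fun x : ℝ => p.eval (x : ℂ) * cexp (-β * x ^ 2 + t * x) := by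
  obtain ⟨C, hC⟩ := exists_norm_eval_le_mul_exp_norm p
  refine ((integrable_exp_mul_abs_mul_norm_cexp_quadratic hβ 1 t).const_mul C).mono'
    (by fun_prop) (.of_forall fun x => ?_)
  rw [norm_mul, one_mul, ← mul_assoc]
  gcongr
  simpa using hC x

end GaussianDecay

section PolyGauss

variable {α : ℂ}

/-- The function `p(x) exp(−αx²)` on the line. -/
noncomputable def polyGauss (α : ℂ) (p : ℂ[X]) (x : ℝ) : ℂ :=
  p.eval (x : ℂ) * cexp (-α * (x : ℂ) ^ 2)

theorem continuous_polyGauss (α : ℂ) (p : ℂ[X]) : Continuous (polyGauss α p) := by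
  unfold polyGauss
  fun_prop

theorem memLp_polyGauss (hα : 0 < α.re) (p : ℂ[X]) : MemLp (polyGauss α p) 2 := by
  obtain ⟨C, hC⟩ := exists_norm_eval_le_mul_exp_norm p
  refine ((memLp_exp_mul_abs_mul_norm_cexp hα 1).const_mul C).mono'
    (continuous_polyGauss α p).aestronglyMeasurable (.of_forall fun x => ?_)
  rw [polyGauss, norm_mul, one_mul, ← mul_assoc]
  gcongr
  simpa using hC x

/-- The map `p ↦ p(x) exp(−αx²)` from polynomials to `L²(ℝ)`. -/
noncomputable def polyGaussLp (hα : 0 < α.re) : ℂ[X] →ₗ[ℂ] Hsp where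
  toFun p := (memLp_polyGauss hα p).toLp
  map_add' p q := by
    rw [← MemLp.toLp_add]
    congr 1 with x
    simp [polyGauss, add_mul]
  map_smul' z p := by
    rw [RingHom.id_apply, ← MemLp.toLp_const_smul]
    congr 1 with x
    simp [polyGauss, mul_assoc]

theorem coeFn_polyGaussLp (hα : 0 < α.re) (p : ℂ[X]) : polyGaussLp hα p =ᵐ[volume] polyGauss α p :=
  (memLp_polyGauss hα p).coeFn_toLp

theorem polyGaussLp_injective (hα : 0 < α.re) : Function.Injective (polyGaussLp hα) := by
  refine (injective_iff_map_eq_zero _).2 fun p hp => ?_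
  have hzero : polyGauss α p = 0 :=
    (continuous_polyGauss α p).ae_eq_iff_eq volume continuous_zero |>.1
      ((coeFn_polyGaussLp hα p).symm.trans (hp ▸ Lp.coeFn_zero ℂ 2 volume))
  refine eq_zero_of_infinite_isRoot p <|
    (Set.infinite_range_of_injective ofReal_injective).mono ?_
  rintro _ ⟨x, rfl⟩
  simpa [polyGauss] using congrFun hzero x

theorem orthogonal_range_polyGaussLp (hα : 0 < α.re) :
    (LinearMap.range (polyGaussLp hα))ᗮ = ⊥ := by
  refine (Submodule.eq_bot_iff _).2 fun f hf => (Lp.eq_zero_iff_ae_eq_zero).2 ?_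
  have hmoment (n : ℕ) : ∫ x : ℝ, (x : ℂ) ^ n • (star (cexp (-α * (x : ℂ) ^ 2)) * f x) = 0 := by
    rw [← (Submodule.mem_orthogonal _ _).1 hf _ ⟨X ^ n, rfl⟩, L2.inner_def]
    refine integral_congr_ae ?_
    filter_upwards [coeFn_polyGaussLp hα (X ^ n)] with x hx
    rw [hx, polyGauss, eval_pow, eval_X, RCLike.inner_apply', RCLike.star_def, map_mul, map_pow,
      conj_ofReal, smul_eq_mul, mul_assoc]
  have hdecay (r : ℝ) : Integrable fun x : ℝ =>
      rexp (r * |x|) • (star (cexp (-α * (x : ℂ) ^ 2)) * f x) := by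
    refine ((memLp_exp_mul_abs_mul_norm_cexp hα r).integrable_mul (Lp.memLp f).norm).mono' ?_ ?_
    · exact (by fun_prop : Continuous fun x : ℝ => rexp (r * |x|)).aestronglyMeasurable.smul
        ((by fun_prop : Continuous fun x : ℝ =>
          star (cexp (-α * (x : ℂ) ^ 2))).aestronglyMeasurable.mul (Lp.aestronglyMeasurable f))
    · exact .of_forall fun x => by simp [-real_smul, norm_smul, mul_assoc]
  filter_upwards [ae_eq_zero_of_forall_integral_pow_smul_eq_zero hdecay hmoment] with x hx
  simpa using hx

end PolyGauss

section Hermite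

variable {α β : ℂ}

/-- The Hermite polynomials of the weight `exp(−2αx²)`: the `n`-th one is
`(−1)ⁿ exp(2αx²) (d/dx)ⁿ exp(−2αx²)`, so that `polyGauss α (gaussHermite α n)` is the `n`-th
Hermite function with Gaussian factor `exp(−αx²)`. -/
noncomputable def gaussHermite (α : ℂ) : ℕ → ℂ[X]
  | 0 => 1
  | n + 1 => C (4 * α) * X * gaussHermite α n - derivative (gaussHermite α n)

theorem gaussHermite_zero (α : ℂ) : gaussHermite α 0 = 1 := rfl

theorem gaussHermite_succ (α : ℂ) (n : ℕ) :
    gaussHermite α (n + 1) = C (4 * α) * X * gaussHermite α n - derivative (gaussHermite α n) :=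
  rfl

theorem derivative_gaussHermite_succ (α : ℂ) (n : ℕ) :
    derivative (gaussHermite α (n + 1)) = C (4 * α * (n + 1)) * gaussHermite α n := by
  induction n with
  | zero => simp [gaussHermite_succ, gaussHermite_zero]
  | succ n ih =>
    have hrec := gaussHermite_succ α n
    rw [gaussHermite_succ α (n + 1), derivative_sub, mul_assoc, derivative_C_mul, derivative_mul,
      derivative_X, ih, derivative_C_mul]
    push_cast
    simp only [C_mul, C_add, C_1] at hrec ⊢
    linear_combination -(C 4 * C α * (C (n : ℂ) + 1)) * hrec

theorem degree_gaussHermite (hα : α ≠ 0) (n : ℕ) : (gaussHermite α n).degree = n := by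
  induction n with
  | zero => simp [gaussHermite_zero]
  | succ n ih =>
    have h4α : 4 * α ≠ 0 := by simpa using hα
    have hmul : (C (4 * α) * X * gaussHermite α n).degree = ((n + 1 : ℕ) : WithBot ℕ) := by
      rw [mul_assoc, degree_C_mul h4α, X_mul, degree_mul_X, ih]
      rfl
    have hlt : (derivative (gaussHermite α n)).degree <
        (C (4 * α) * X * gaussHermite α n).degree := by
      rw [hmul]
      exact degree_derivative_le.trans_lt (by rw [ih]; exact_mod_cast n.lt_succ_self)
    rw [gaussHermite_succ, degree_sub_eq_left_of_degree_lt hlt, hmul]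

theorem gaussHermite_ne_zero (hα : α ≠ 0) (n : ℕ) : gaussHermite α n ≠ 0 := fun h => by
  simpa [h] using degree_gaussHermite hα n

theorem span_range_gaussHermite (hα : α ≠ 0) :
    Submodule.span ℂ (Set.range (gaussHermite α)) = ⊤ := by
  let S : Polynomial.Sequence ℂ := ⟨gaussHermite α, degree_gaussHermite hα⟩
  exact S.span fun n => (leadingCoeff_ne_zero.2 (S.ne_zero n)).isUnit

/-- The linear functional `p ↦ ∫ p(y) exp(−βy² + ty) dy`. -/
noncomputable def gaussIntegral (hβ : 0 < β.re) (t : ℂ) : ℂ[X] →ₗ[ℂ] ℂ where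
  toFun p := ∫ y : ℝ, p.eval (y : ℂ) * cexp (-β * y ^ 2 + t * y)
  map_add' p q := by
    rw [← integral_add (integrable_eval_mul_cexp_quadratic hβ t p)
      (integrable_eval_mul_cexp_quadratic hβ t q)]
    simp only [eval_add, add_mul]
  map_smul' z p := by
    simp only [eval_smul, smul_eq_mul, mul_assoc, integral_const_mul, RingHom.id_apply]

theorem gaussIntegral_apply (hβ : 0 < β.re) (t : ℂ) (p : ℂ[X]) :
    gaussIntegral hβ t p = ∫ y : ℝ, p.eval (y : ℂ) * cexp (-β * y ^ 2 + t * y) := rfl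

theorem gaussIntegral_one (hβ : 0 < β.re) (t : ℂ) :
    gaussIntegral hβ t 1 = (π / β) ^ (1 / 2 : ℂ) * cexp (t ^ 2 / (4 * β)) := by
  have h := integral_cexp_quadratic (b := -β) (by simpa using hβ) t 0
  simpa [gaussIntegral_apply, neg_div_neg_eq, div_neg] using h

theorem gaussIntegral_derivative (hβ : 0 < β.re) (t : ℂ) (p : ℂ[X]) :
    gaussIntegral hβ t (derivative p) = gaussIntegral hβ t ((C (2 * β) * X - C t) * p) := by
  have hderiv (y : ℝ) : HasDerivAt (fun y : ℝ => p.eval (y : ℂ) * cexp (-β * y ^ 2 + t * y))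
      ((derivative p - (C (2 * β) * X - C t) * p).eval (y : ℂ) * cexp (-β * y ^ 2 + t * y)) y := by
    have hquad : HasDerivAt (fun z : ℂ => -β * z ^ 2 + t * z) (-β * (2 * y) + t) y := by
      simpa using! ((hasDerivAt_pow 2 (y : ℂ)).const_mul (-β)).add ((hasDerivAt_id' _).const_mul t)
    refine ((p.hasDerivAt (y : ℂ)).mul hquad.cexp).comp_ofReal.congr_deriv ?_
    simp only [eval_sub, eval_mul, eval_C, eval_X]
    ring
  have hzero := integral_eq_zero_of_hasDerivAt_of_integrable hderiv
    (integrable_eval_mul_cexp_quadratic hβ t _) (integrable_eval_mul_cexp_quadratic hβ t p)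
  rwa [← gaussIntegral_apply, map_sub, sub_eq_zero] at hzero

theorem gaussIntegral_X_mul_sub_derivative (hβ : 0 < β.re) {q : ℂ} (hα : 2 * α = β * (1 - q ^ 2))
    (x : ℂ) (p : ℂ[X]) :
    gaussIntegral hβ (2 * β * q * x) (C (4 * α) * X * p - derivative p) =
      4 * α * q * x * gaussIntegral hβ (2 * β * q * x) p -
        q ^ 2 * gaussIntegral hβ (2 * β * q * x) (derivative p) := by
  have hsplit : C (4 * α) * X * p =
      (1 - q ^ 2) • ((C (2 * β) * X - C (2 * β * q * x)) * p) + (4 * α * q * x) • p := by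
    have hC := congrArg C hα
    simp only [smul_eq_C_mul, C_mul, C_sub, C_pow, C_1, map_ofNat] at hC ⊢
    linear_combination 2 * (X - C q * C x) * p * hC
  rw [hsplit, map_sub, map_add, map_smul, map_smul, ← gaussIntegral_derivative, smul_eq_mul,
    smul_eq_mul]
  ring

theorem gaussIntegral_gaussHermite (hβ : 0 < β.re) {q : ℂ} (hα : 2 * α = β * (1 - q ^ 2)) (x : ℂ)
    (n : ℕ) :
    gaussIntegral hβ (2 * β * q * x) (gaussHermite α n) =
      (π / β) ^ (1 / 2 : ℂ) * cexp (β * q ^ 2 * x ^ 2) * q ^ n * (gaussHermite α n).eval x := by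
  have hβ0 : β ≠ 0 := ne_zero_of_re_pos hβ
  have hexp : (2 * β * q * x) ^ 2 / (4 * β) = β * q ^ 2 * x ^ 2 := by field_simp; ring
  induction n using Nat.twoStepInduction with
  | zero => simp [gaussHermite_zero, gaussIntegral_one, hexp]
  | one =>
    rw [gaussHermite_succ, gaussIntegral_X_mul_sub_derivative hβ hα]
    simp only [gaussHermite_zero, gaussIntegral_one, hexp, derivative_one, map_zero, mul_zero,
      sub_zero, mul_one, eval_mul, eval_C, eval_X, pow_one]
    ring
  | more n ih ih_succ =>
    rw [gaussHermite_succ α (n + 1), gaussIntegral_X_mul_sub_derivative hβ hα, ih_succ,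
      derivative_gaussHermite_succ, ← smul_eq_C_mul, map_smul, ih]
    simp only [eval_sub, eval_mul, eval_C, eval_X, eval_smul, smul_eq_mul]
    ring

end Hermite

theorem IsKerOp.isCompactOperator {k : ℝ → ℝ → ℂ} {T : Hsp →L[ℂ] Hsp} (hT : IsKerOp k T)
    (hk : ∀ x, AEStronglyMeasurable (k x)) {G G' : ℝ → ℝ} (hG : MemLp G 2) (hG' : MemLp G' 2)
    (hkG : ∀ x y, ‖k x y‖ ≤ G x * G' y) : IsCompactOperator T := by
  have hmem (x : ℝ) : MemLp (fun y => star (k x y)) 2 :=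
    (hG'.const_mul (G x)).mono' (hk x).star (.of_forall fun y => by simpa using hkG x y)
  have hnorm (x : ℝ) : ‖(hmem x).toLp‖ ≤ ‖G x‖ * ‖hG'.toLp‖ := by
    refine Lp.norm_le_mul_norm_of_ae_le_mul ?_
    filter_upwards [(hmem x).coeFn_toLp, hG'.coeFn_toLp] with y hky hGy
    rw [hky, hGy, norm_star, ← norm_mul]
    exact (hkG x y).trans (Real.le_norm_self _)
  have : Fact ((2 : ENNReal) ≠ ⊤) := ⟨by simp⟩
  have : TopologicalSpace.SeparableSpace Hsp :=
    TopologicalSpace.SecondCountableTopology.to_separableSpace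
  refine isCompactOperator_of_ae_eq_inner (hG.norm.mul_const _) hnorm fun f => ?_
  filter_upwards [hT f] with x hx
  rw [hx, L2.inner_def]
  refine integral_congr_ae ?_
  filter_upwards [(hmem x).coeFn_toLp] with y hky
  rw [hky, RCLike.inner_apply', RCLike.star_def, RCLike.conj_conj]

section Mehler

variable {s c α : ℂ}

/-- Mehler's kernel `exp(−s(x−y)² − c(x²+y²))`. -/
noncomputable def mehlerKer (s c : ℂ) (x y : ℝ) : ℂ :=
  cexp (-s * ((x : ℂ) - y) ^ 2 - c * ((x : ℂ) ^ 2 + (y : ℂ) ^ 2))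

/-- The `n`-th eigenvalue of the integral operator with kernel `mehlerKer s c`, where
`α² = 2sc + c²` and `Re α > 0`; the square root is the principal one. -/
noncomputable def mehlerEig (s c α : ℂ) (n : ℕ) : ℂ :=
  (π / (s + α + c)) ^ (1 / 2 : ℂ) * (s / (s + α + c)) ^ n

theorem continuous_mehlerKer (s c : ℂ) (x : ℝ) : Continuous (mehlerKer s c x) := by
  unfold mehlerKer
  fun_prop

theorem norm_mehlerKer_le (s c : ℂ) (x y : ℝ) :
    ‖mehlerKer s c x y‖ ≤ rexp (-(min c.re (2 * s + c).re) * x ^ 2) *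
      rexp (-(min c.re (2 * s + c).re) * y ^ 2) := by
  set m := min c.re (2 * s + c).re
  have hexponent : -s * ((x : ℂ) - y) ^ 2 - c * ((x : ℂ) ^ 2 + (y : ℂ) ^ 2) =
      -(c * (((x + y) ^ 2 / 2 : ℝ) : ℂ) + (2 * s + c) * (((x - y) ^ 2 / 2 : ℝ) : ℂ)) := by
    push_cast
    ring
  rw [mehlerKer, hexponent, Complex.norm_exp, ← Real.exp_add, Real.exp_le_exp, neg_re, add_re,
    re_mul_ofReal, re_mul_ofReal]
  have hplus : m * ((x + y) ^ 2 / 2) ≤ c.re * ((x + y) ^ 2 / 2) := by gcongr; exact min_le_left _ _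
  have hminus : m * ((x - y) ^ 2 / 2) ≤ (2 * s + c).re * ((x - y) ^ 2 / 2) := by
    gcongr
    exact min_le_right _ _
  linarith

theorem memLp_exp_neg_mul_sq {m : ℝ} (hm : 0 < m) : MemLp (fun x : ℝ => rexp (-m * x ^ 2)) 2 := by
  have h := memLp_exp_mul_abs_mul_norm_cexp (β := m) (by simpa using hm) 0
  simpa [← ofReal_pow, ← ofReal_neg, ← ofReal_mul, Complex.norm_exp_ofReal] using h

theorem IsKerOp.isCompactOperator_of_mehlerKer {T : Hsp →L[ℂ] Hsp}
    (hT : IsKerOp (mehlerKer s c) T) (hc : 0 < c.re) (hsc : 0 < (2 * s + c).re) :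
    IsCompactOperator T :=
  have hG := memLp_exp_neg_mul_sq (lt_min hc hsc)
  hT.isCompactOperator (fun x => (continuous_mehlerKer s c x).aestronglyMeasurable) hG hG
    (norm_mehlerKer_le s c)

theorem re_add_add_pos (hc : 0 < c.re) (hsc : 0 < (2 * s + c).re) (hα : 0 < α.re) :
    0 < (s + α + c).re := by
  simp only [add_re, mul_re, re_ofNat, im_ofNat, zero_mul, sub_zero] at hsc ⊢
  linarith

theorem mehlerEig_ne_zero (hs : s ≠ 0) (hc : 0 < c.re) (hsc : 0 < (2 * s + c).re)
    (hα : 0 < α.re) (n : ℕ) : mehlerEig s c α n ≠ 0 := by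
  have hD : s + α + c ≠ 0 := ne_zero_of_re_pos (re_add_add_pos hc hsc hα)
  have hπ : (π : ℂ) ≠ 0 := ofReal_ne_zero.2 pi_ne_zero
  exact mul_ne_zero (by simp [cpow_eq_zero_iff, hπ, hD]) (pow_ne_zero n (div_ne_zero hs hD))

theorem integral_mehlerKer_mul_polyGauss_gaussHermite (hc : 0 < c.re) (hsc : 0 < (2 * s + c).re)
    (hα : 0 < α.re) (hsq : α ^ 2 = 2 * s * c + c ^ 2) (n : ℕ) (x : ℝ) :
    ∫ y, mehlerKer s c x y * polyGauss α (gaussHermite α n) y =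
      mehlerEig s c α n * polyGauss α (gaussHermite α n) x := by
  have hDre := re_add_add_pos hc hsc hα
  have hD : s + α + c ≠ 0 := ne_zero_of_re_pos hDre
  set D := s + α + c with hD_def
  set q := s / D
  have hqD : q * D = s := div_mul_cancel₀ s hD
  have hαq : 2 * α = D * (1 - q ^ 2) := by
    refine mul_right_cancel₀ hD ?_
    linear_combination (q * D + s) * hqD + (2 * α - D - s - α - c) * hD_def + hsq
  have hintegrand (y : ℝ) : mehlerKer s c x y * polyGauss α (gaussHermite α n) y =
      cexp (-(s + c) * x ^ 2) *
        ((gaussHermite α n).eval (y : ℂ) * cexp (-D * y ^ 2 + 2 * D * q * x * y)) := by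
    rw [mehlerKer, polyGauss, mul_left_comm, ← Complex.exp_add, mul_left_comm, ← Complex.exp_add,
      hD_def]
    congr 2
    linear_combination (-2 * x * y : ℂ) * hqD
  simp only [hintegrand]
  rw [integral_const_mul, ← gaussIntegral_apply hDre, gaussIntegral_gaussHermite hDre hαq,
    mehlerEig, polyGauss]
  have hexp : cexp (-(s + c) * x ^ 2) * cexp (D * q ^ 2 * x ^ 2) = cexp (-α * x ^ 2) := by
    rw [← Complex.exp_add]
    congr 1
    linear_combination (x : ℂ) ^ 2 * (hD_def + hαq)
  rw [← hexp]
  ring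

theorem IsKerOp.apply_polyGaussLp_gaussHermite {T : Hsp →L[ℂ] Hsp}
    (hT : IsKerOp (mehlerKer s c) T) (hc : 0 < c.re) (hsc : 0 < (2 * s + c).re) (hα : 0 < α.re)
    (hsq : α ^ 2 = 2 * s * c + c ^ 2) (n : ℕ) :
    T (polyGaussLp hα (gaussHermite α n)) =
      mehlerEig s c α n • polyGaussLp hα (gaussHermite α n) := by
  have hφ := coeFn_polyGaussLp hα (gaussHermite α n)
  refine Lp.ext ?_
  filter_upwards [hT (polyGaussLp hα (gaussHermite α n)), hφ,
    Lp.coeFn_smul (mehlerEig s c α n) (polyGaussLp hα (gaussHermite α n))] with x hTx hφx hsmul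
  rw [hTx, hsmul, Pi.smul_apply, hφx, smul_eq_mul,
    ← integral_mehlerKer_mul_polyGauss_gaussHermite hc hsc hα hsq]
  refine integral_congr_ae ?_
  filter_upwards [hφ] with y hφy
  rw [hφy]

theorem orthogonal_span_polyGaussLp_gaussHermite (hα : 0 < α.re) :
    (Submodule.span ℂ (Set.range fun n => polyGaussLp hα (gaussHermite α n)))ᗮ = ⊥ := by
  rw [Set.range_comp' (polyGaussLp hα) (gaussHermite α), ← Submodule.map_span,
    span_range_gaussHermite (ne_zero_of_re_pos hα), ← LinearMap.range_eq_map,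
    orthogonal_range_polyGaussLp]

theorem eq_smul_polyGaussLp_of_ae_eq_gaussC (hα : 0 < α.re) {g : Hsp}
    (hg : ∀ᵐ x, g x = gaussC α x) :
    g = (2 * α / π) ^ (1 / 4 : ℂ) • polyGaussLp hα (gaussHermite α 0) := by
  refine Lp.ext ?_
  filter_upwards [hg, coeFn_polyGaussLp hα (gaussHermite α 0),
    Lp.coeFn_smul ((2 * α / π : ℂ) ^ (1 / 4 : ℂ)) (polyGaussLp hα (gaussHermite α 0))]
    with x hgx hφx hsmul
  rw [hgx, hsmul, Pi.smul_apply, hφx, gaussC, polyGauss, gaussHermite_zero, eval_one, one_mul,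
    smul_eq_mul]

theorem IsKerOp.spectrum_mehlerKer_diff_zero {T : Hsp →L[ℂ] Hsp}
    (hT : IsKerOp (mehlerKer s c) T) (hs : s ≠ 0) (hc : 0 < c.re) (hsc : 0 < (2 * s + c).re)
    (hα : 0 < α.re) (hsq : α ^ 2 = 2 * s * c + c ^ 2) :
    spectrum ℂ T \ {0} = Set.range (mehlerEig s c α) := by
  have hne (n : ℕ) : polyGaussLp hα (gaussHermite α n) ≠ 0 :=
    (map_ne_zero_iff _ (polyGaussLp_injective hα)).2 (gaussHermite_ne_zero (ne_zero_of_re_pos hα) n)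
  rw [spectrum_diff_zero_eq_range_diff_zero (hT.isCompactOperator_of_mehlerKer hc hsc) hne
    (hT.apply_polyGaussLp_gaussHermite hc hsc hα hsq) (orthogonal_span_polyGaussLp_gaussHermite hα)]
  exact Set.sdiff_singleton_eq_self fun ⟨n, hn⟩ => mehlerEig_ne_zero hs hc hsc hα n hn

end Mehler

theorem stmt_6_general {s c α : ℂ} (hs : s ≠ 0) (hc : 0 < c.re) (hsc : 0 < (2 * s + c).re)
    (hα : 0 < α.re) (hsq : α ^ 2 = 2 * s * c + c ^ 2) {T : Hsp →L[ℂ] Hsp}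
    (hT : IsKerOp (mehlerKer s c) T) :
    spectrum ℂ T \ {0} = Set.range (mehlerEig s c α) ∧
      ∀ g : Hsp, (∀ᵐ x, g x = gaussC α x) → T g = mehlerEig s c α 0 • g := by
  refine ⟨hT.spectrum_mehlerKer_diff_zero hs hc hsc hα hsq, fun g hg => ?_⟩
  rw [eq_smul_polyGaussLp_of_ae_eq_gaussC hα hg, map_smul,
    hT.apply_polyGaussLp_gaussHermite hc hsc hα hsq 0, smul_comm]

theorem kerHr_eq_mehlerKer (W : ℝ) (ζ : ℂ) (a b : ℝ) :
    kerHr W ζ a b = mehlerKer ((W : ℂ) ^ 2 * ζ ^ 2) ((a + b * Complex.I) / 2) := by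
  ext x y
  rw [kerHr, mehlerKer, neg_mul]

/-- the nonzero spectrum of `K_hr` is `{λ_j^hr : j ∈ ℕ}`, and the Gaussian
`g_{α_hr}` is an eigenfunction with eigenvalue `λ₀^hr`. -/
theorem stmt_6 :
    ∀ (W : ℝ) (ζ : ℂ) (a b : ℝ), 0 < W → ‖ζ‖ = 1 → 0 < (ζ^2).re → 0 < a →
    ∀ αhr : ℂ, 0 < αhr.re →
      αhr^2 = (W : ℂ)^2 * ζ^2 * ((a : ℂ) + (b : ℂ) * Complex.I)
        + ((a : ℂ) + (b : ℂ) * Complex.I)^2 / 4 →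
    ∀ Khr : Hsp →L[ℂ] Hsp, IsKerOp (kerHr W ζ a b) Khr →
      (spectrum ℂ Khr \ {0} = Set.range (lamHr W ζ a b αhr)) ∧
      ∀ g : Hsp, (∀ᵐ x : ℝ, (g : ℝ → ℂ) x = gaussC αhr x) →
        Khr g = lamHr W ζ a b αhr 0 • g := by
  intro W ζ a b hW _ hζ ha αhr hα hsq Khr hK
  have hs : 0 < ((W : ℂ) ^ 2 * ζ ^ 2).re := by
    rw [← ofReal_pow, re_ofReal_mul]
    positivity
  have hc : 0 < (((a : ℂ) + b * Complex.I) / 2).re := by simpa using ha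
  rw [kerHr_eq_mehlerKer] at hK
  exact stmt_6_general (ne_zero_of_re_pos hs) hc
    (by rw [two_mul, add_re, add_re]; positivity) hα (by rw [hsq]; ring) hK
end

section
/- Assume additionally that ζ²(a+ib) is real and strictly positive, and let α > 0 be the positive real number with α² = W²·ζ²(a+ib) and g_α(x) = (2α/π)^{1/4}·exp(−αx²). Then there exist constants C', W₀ (depending on a, b, ζ) such that for all W ≥ W₀ there is a unit-norm eigenfunction g̃ of K_hr*·K_hr corresponding to its largest eigenvalue which satisfies ‖g̃ − g_α‖_{L²(ℝ)} ≤ C'·W^{−2}. -/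
open MeasureTheory Complex Real
open scoped ComplexInnerProductSpace

/-!
Gaussian kernels are closed under adjoints and composition, so `K* K` has a Gaussian kernel. Being
Hermitian, it is a positive kernel conjugated by a phase `exp(i s x²)`. It sends Gaussians
`exp(-γ x²)` to Gaussians, moving `γ` by a Möbius map, and the Gaussian at the fixed point of that
map is, up to the same phase, a positive eigenfunction; by the Perron–Frobenius argument its
eigenvalue is the largest one.

Put `c = W²ζ²` and `β = (a + ib)/2`. The assumption that `α² = 2cβ` is positive says that
`β = τ conj c` with `τ = α² / (2|c|²) = O(W⁻²)`, and the fixed point then satisfies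
`|γ - α| = O(τ) |conj γ + α|`. The overlap of two normalised Gaussians depends only on the
pseudo-hyperbolic distance `|γ₁ - γ₂| / |conj γ₁ + γ₂|` of their exponents, and this is `O(τ)`.
-/

open scoped ComplexConjugate

section HilbertSchmidt

variable {α β 𝕜 : Type*} [MeasurableSpace α] [MeasurableSpace β] [RCLike 𝕜]
  {μ : Measure α} {ν : Measure β} {f : α → 𝕜} {k : α → β → 𝕜} {g : β → 𝕜}

lemma memLp_two_mul_prod (hf : MemLp f 2 μ) (hg : MemLp g 2 ν) :
    MemLp (fun p : α × β => f p.1 * g p.2) 2 (μ.prod ν) := by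
  have hmeas : AEStronglyMeasurable (fun p : α × β => f p.1 * g p.2) (μ.prod ν) :=
    hf.1.comp_fst.mul hg.1.comp_snd
  rw [memLp_two_iff_integrable_sq_norm hmeas]
  simp only [norm_mul, mul_pow]
  exact ((memLp_two_iff_integrable_sq_norm hf.1).1 hf).mul_prod
    ((memLp_two_iff_integrable_sq_norm hg.1).1 hg)

lemma integrable_mul_kernel_mul_s11 (hf : MemLp f 2 μ)
    (hk : MemLp (Function.uncurry k) 2 (μ.prod ν)) (hg : MemLp g 2 ν) :
    Integrable (fun p : α × β => f p.1 * (k p.1 p.2 * g p.2)) (μ.prod ν) :=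
  (hk.integrable_mul (memLp_two_mul_prod hf hg)).congr
    (.of_forall fun _ => mul_left_comm _ _ _)

lemma ae_memLp_two_section [SFinite μ] [SFinite ν] (hk : MemLp (Function.uncurry k) 2 (μ.prod ν)) :
    ∀ᵐ x ∂μ, MemLp (k x) 2 ν := by
  filter_upwards [hk.1.prodMk_left,
    ((memLp_two_iff_integrable_sq_norm hk.1).1 hk).prod_right_ae] with x hmeas hint
  exact (memLp_two_iff_integrable_sq_norm hmeas).2 hint

end HilbertSchmidt

lemma integral_mul_norm_pos {φ : ℝ → ℝ} (hφ : MemLp φ 2) (hφ_pos : ∀ x, 0 < φ x) {v : Hsp}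
    (hv : v ≠ 0) : 0 < ∫ x : ℝ, φ x * ‖(v : ℝ → ℂ) x‖ := by
  have hint : Integrable fun x => φ x * ‖(v : ℝ → ℂ) x‖ := hφ.integrable_mul (Lp.memLp v).norm
  have hnonneg : 0 ≤ fun x => φ x * ‖(v : ℝ → ℂ) x‖ := fun x =>
    mul_nonneg (hφ_pos x).le (norm_nonneg _)
  refine (integral_nonneg hnonneg).lt_of_ne' fun hzero => hv ?_
  rw [Lp.eq_zero_iff_ae_eq_zero]
  filter_upwards [(integral_eq_zero_iff_of_nonneg hnonneg hint).1 hzero] with x hx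
  simpa [(hφ_pos x).ne'] using hx

namespace IsKerOp

variable {k l : ℝ → ℝ → ℂ} {S T : Hsp →L[ℂ] Hsp}

lemma apply_indicator_one (hT : IsKerOp k T) {s : Set ℝ} (hs : MeasurableSet s)
    (hs_fin : volume s ≠ ⊤) :
    ∀ᵐ x : ℝ, (T (indicatorConstLp 2 hs hs_fin 1) : ℝ → ℂ) x = ∫ y in s, k x y := by
  filter_upwards [hT (indicatorConstLp 2 hs hs_fin 1)] with x hx
  rw [hx, ← integral_indicator hs]
  refine integral_congr_ae ?_
  filter_upwards [indicatorConstLp_coeFn (hs := hs) (hμs := hs_fin) (c := (1 : ℂ)) (p := 2)]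
    with y hy
  rw [hy]
  by_cases hys : y ∈ s <;> simp [hys]

lemma adjoint (hT : IsKerOp k T)
    (hk : MemLp (Function.uncurry k) 2 (volume.prod volume)) :
    IsKerOp (fun x y => conj (k y x)) (ContinuousLinearMap.adjoint T) := by
  intro f
  have hint (s : Set ℝ) (hs_fin : volume s < ⊤) :
      Integrable (Function.uncurry fun x y : ℝ => conj (k x y) * (f : ℝ → ℂ) x)
        (volume.prod (volume.restrict s)) := by
    have : IsFiniteMeasure (volume.restrict s) := ⟨by simpa using hs_fin⟩
    have hk_s : MemLp (Function.uncurry fun x y => conj (k x y)) 2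
        (volume.prod (volume.restrict s)) :=
      (hk.mono_measure (Measure.prod_mono le_rfl Measure.restrict_le_self)).star
    refine (integrable_mul_kernel_mul_s11 (Lp.memLp f) hk_s (memLp_const (1 : ℂ))).congr
      (.of_forall fun p => ?_)
    simp only [Function.uncurry, mul_one]
    exact mul_comm _ _
  refine ae_eq_of_forall_setIntegral_eq_of_sigmaFinite
    (fun s _ hs_fin => integrableOn_Lp_of_measure_ne_top _ one_le_two hs_fin.ne)
    (fun s _ hs_fin => (hint s hs_fin).integral_prod_right) fun s hs hs_fin => ?_
  rw [← L2.inner_indicatorConstLp_one (𝕜 := ℂ) hs hs_fin.ne,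
    ContinuousLinearMap.adjoint_inner_right, L2.inner_def, ← integral_integral_swap (hint s hs_fin)]
  refine integral_congr_ae ?_
  filter_upwards [hT.apply_indicator_one hs hs_fin.ne] with x hx
  rw [hx, RCLike.inner_apply, ← integral_conj, integral_mul_const, mul_comm]

lemma comp (hS : IsKerOp l S) (hT : IsKerOp k T)
    (hl : MemLp (Function.uncurry l) 2 (volume.prod volume))
    (hk : MemLp (Function.uncurry k) 2 (volume.prod volume)) :
    IsKerOp (fun x y => ∫ z : ℝ, l x z * k z y) (S ∘L T) := by
  intro f
  filter_upwards [hS (T f), ae_memLp_two_section hl] with x hx hlx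
  calc (S (T f) : ℝ → ℂ) x
      = ∫ z : ℝ, ∫ y : ℝ, l x z * (k z y * (f : ℝ → ℂ) y) := by
        rw [hx]
        refine integral_congr_ae ?_
        filter_upwards [hT f] with z hz
        rw [hz, integral_const_mul]
    _ = ∫ y : ℝ, ∫ z : ℝ, l x z * (k z y * (f : ℝ → ℂ) y) :=
        integral_integral_swap (integrable_mul_kernel_mul_s11 hlx hk (Lp.memLp f))
    _ = ∫ y : ℝ, (∫ z : ℝ, l x z * k z y) * (f : ℝ → ℂ) y := by
        simp only [← mul_assoc, integral_mul_const]

lemma ae_norm_apply_le (hT : IsKerOp k T) (f : Hsp) :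
    ∀ᵐ x : ℝ, ‖(T f : ℝ → ℂ) x‖ ≤ ∫ y : ℝ, ‖k x y‖ * ‖(f : ℝ → ℂ) y‖ := by
  filter_upwards [hT f] with x hx
  simpa only [hx, norm_mul] using
    norm_integral_le_integral_norm fun y => k x y * (f : ℝ → ℂ) y

/-- Pair `|s v| ≤ |k| |v|` with the positive weight `φ` and move `|k|` onto `φ`. -/
lemma norm_eigenvalue_le (hT : IsKerOp k T)
    (hk : MemLp (Function.uncurry k) 2 (volume.prod volume)) {φ : ℝ → ℝ} (hφ : MemLp φ 2)
    (hφ_pos : ∀ x, 0 < φ x) {t : ℝ} (hφ_le : ∀ y, ∫ x : ℝ, φ x * ‖k x y‖ ≤ t * φ y)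
    {s : ℂ} {v : Hsp} (hv : v ≠ 0) (hsv : T v = s • v) : ‖s‖ ≤ t := by
  have hv_norm : MemLp (fun x => ‖(v : ℝ → ℂ) x‖) 2 := (Lp.memLp v).norm
  have hφv_int : Integrable fun x => φ x * ‖(v : ℝ → ℂ) x‖ := hφ.integrable_mul hv_norm
  have hint : Integrable (Function.uncurry fun x y => φ x * (‖k x y‖ * ‖(v : ℝ → ℂ) y‖))
      (volume.prod volume) :=
    integrable_mul_kernel_mul_s11 (k := fun x y => ‖k x y‖) hφ hk.norm hv_norm
  have hpointwise : ∀ᵐ x : ℝ, φ x * (‖s‖ * ‖(v : ℝ → ℂ) x‖) ≤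
      ∫ y : ℝ, φ x * (‖k x y‖ * ‖(v : ℝ → ℂ) y‖) := by
    filter_upwards [hT.ae_norm_apply_le v, Lp.coeFn_smul s v] with x hTv hsmul
    rw [hsv, hsmul, Pi.smul_apply, norm_smul] at hTv
    rw [integral_const_mul]
    exact mul_le_mul_of_nonneg_left hTv (hφ_pos x).le
  refine le_of_mul_le_mul_right ?_ (integral_mul_norm_pos hφ hφ_pos hv)
  calc ‖s‖ * ∫ x : ℝ, φ x * ‖(v : ℝ → ℂ) x‖
      = ∫ x : ℝ, φ x * (‖s‖ * ‖(v : ℝ → ℂ) x‖) := by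
        simp only [mul_left_comm (φ _), integral_const_mul]
    _ ≤ ∫ x : ℝ, ∫ y : ℝ, φ x * (‖k x y‖ * ‖(v : ℝ → ℂ) y‖) := by
        refine integral_mono_ae ?_ hint.integral_prod_left hpointwise
        simpa only [mul_left_comm (φ _)] using hφv_int.const_mul ‖s‖
    _ = ∫ y : ℝ, (∫ x : ℝ, φ x * ‖k x y‖) * ‖(v : ℝ → ℂ) y‖ := by
        rw [integral_integral_swap hint]
        simp only [← mul_assoc, integral_mul_const]
    _ ≤ ∫ y : ℝ, t * (φ y * ‖(v : ℝ → ℂ) y‖) := by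
        refine integral_mono ?_ (hφv_int.const_mul t) fun y => ?_
        · simpa only [Function.uncurry, ← mul_assoc, integral_mul_const] using
            hint.integral_prod_right
        · simpa only [mul_assoc] using
            mul_le_mul_of_nonneg_right (hφ_le y) (norm_nonneg ((v : ℝ → ℂ) y))
    _ = t * ∫ y : ℝ, φ y * ‖(v : ℝ → ℂ) y‖ := integral_const_mul _ _

end IsKerOp

lemma ofReal_sqrt_eq_cpow {x : ℝ} (hx : 0 ≤ x) : ((√x : ℝ) : ℂ) = (x : ℂ) ^ (1 / 2 : ℂ) := by
  rw [Real.sqrt_eq_rpow, Complex.ofReal_cpow hx]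
  norm_num

/-- The Gaussian `exp(-γ x²)` of complex exponent `γ`. -/
noncomputable def gaussFun (γ : ℂ) (x : ℝ) : ℂ := cexp (-γ * (x : ℂ) ^ 2)

lemma norm_gaussFun (γ : ℂ) (x : ℝ) : ‖gaussFun γ x‖ = Real.exp (-γ.re * x ^ 2) := by
  rw [gaussFun, norm_cexp_neg_mul_sq]

lemma ofReal_norm_gaussFun (γ : ℂ) (x : ℝ) : (‖gaussFun γ x‖ : ℂ) = gaussFun γ.re x := by
  rw [norm_gaussFun, gaussFun]
  push_cast
  rfl

lemma conj_gaussFun (γ : ℂ) (x : ℝ) : conj (gaussFun γ x) = gaussFun (conj γ) x := by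
  rw [gaussFun, gaussFun, ← Complex.exp_conj, map_mul, map_neg, map_pow, Complex.conj_ofReal]

/-- The Gaussian kernel `exp(-A x² + 2 C x y - B y²)`; these are stable under adjoints and
composition. -/
noncomputable def gaussKer (A B C : ℂ) (x y : ℝ) : ℂ :=
  cexp (-A * (x : ℂ) ^ 2 + 2 * C * x * y - B * (y : ℂ) ^ 2)

lemma continuous_gaussKer (A B C : ℂ) : Continuous (Function.uncurry (gaussKer A B C)) := by
  unfold gaussKer Function.uncurry
  fun_prop

lemma conj_gaussKer (A B C : ℂ) (x y : ℝ) :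
    conj (gaussKer A B C x y) = gaussKer (conj B) (conj A) (conj C) y x := by
  rw [gaussKer, gaussKer, ← Complex.exp_conj]
  congr 1
  simp only [map_add, map_sub, map_mul, map_neg, map_pow, map_ofNat, Complex.conj_ofReal]
  ring

lemma norm_gaussKer (A B C : ℂ) (x y : ℝ) :
    ‖gaussKer A B C x y‖ = Real.exp (-A.re * x ^ 2 + 2 * C.re * x * y - B.re * y ^ 2) := by
  rw [gaussKer, Complex.norm_exp]
  congr 1
  simp [← Complex.ofReal_pow]

lemma ofReal_norm_gaussKer (A B C : ℂ) (x y : ℝ) :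
    (‖gaussKer A B C x y‖ : ℂ) = gaussKer A.re B.re C.re x y := by
  rw [norm_gaussKer, gaussKer]
  push_cast
  rfl

lemma integral_gaussKer_mul_gaussKer {A B C A' B' C' : ℂ} (h : 0 < (B + A').re) (x y : ℝ) :
    ∫ z : ℝ, gaussKer A B C x z * gaussKer A' B' C' z y =
      (π / (B + A')) ^ (1 / 2 : ℂ) *
        gaussKer (A - C ^ 2 / (B + A')) (B' - C' ^ 2 / (B + A')) (C * C' / (B + A')) x y := by
  have hne : B + A' ≠ 0 := fun h0 => by simp [h0] at h
  have hsum (z : ℝ) : gaussKer A B C x z * gaussKer A' B' C' z y =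
      cexp (-(B + A') * (z : ℂ) ^ 2 + (2 * C * x + 2 * C' * y) * z +
        (-A * (x : ℂ) ^ 2 - B' * (y : ℂ) ^ 2)) := by
    rw [gaussKer, gaussKer, ← Complex.exp_add]
    ring_nf
  simp_rw [hsum]
  rw [integral_cexp_quadratic (by simpa only [Complex.neg_re, neg_lt_zero]), neg_neg, gaussKer]
  congr 2
  field_simp
  ring

lemma integral_gaussKer_mul_gaussFun {A B C γ : ℂ} (h : 0 < (B + γ).re) (x : ℝ) :
    ∫ y : ℝ, gaussKer A B C x y * gaussFun γ y =
      (π / (B + γ)) ^ (1 / 2 : ℂ) * gaussFun (A - C ^ 2 / (B + γ)) x := by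
  simpa [gaussKer, gaussFun] using integral_gaussKer_mul_gaussKer (C := C) (B' := 0) (C' := 0) h x 0

lemma memLp_gaussFun {γ : ℂ} (hγ : 0 < γ.re) :
    MemLp (gaussFun γ) 2 := by
  have hcont : Continuous (gaussFun γ) := by
    unfold gaussFun
    fun_prop
  rw [memLp_two_iff_integrable_sq_norm hcont.aestronglyMeasurable]
  refine (integrable_exp_neg_mul_sq (b := 2 * γ.re) (by positivity)).congr (.of_forall fun x => ?_)
  simp only [norm_gaussFun, ← Real.exp_nat_mul]
  ring_nf

lemma memLp_gaussKer {A B C : ℂ} (hA : 0 < A.re) (hdet : C.re ^ 2 < A.re * B.re) :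
    MemLp (Function.uncurry (gaussKer A B C)) 2 (volume.prod volume) := by
  have hB : 0 < B.re := pos_of_mul_pos_right ((sq_nonneg C.re).trans_lt hdet) hA.le
  -- determinant over trace, a lower bound for the smaller eigenvalue of the real quadratic form
  set ε : ℝ := (A.re * B.re - C.re ^ 2) / (A.re + B.re) with hε
  have hε_pos : 0 < ε := div_pos (sub_pos.2 hdet) (add_pos hA hB)
  have hform (x y : ℝ) :
      ε * (x ^ 2 + y ^ 2) ≤ A.re * x ^ 2 - 2 * C.re * x * y + B.re * y ^ 2 := by
    rw [hε, div_mul_eq_mul_div, div_le_iff₀ (add_pos hA hB)]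
    nlinarith [sq_nonneg (A.re * x - C.re * y), sq_nonneg (C.re * x - B.re * y)]
  have hgauss : MemLp (gaussFun ε) 2 := memLp_gaussFun (by simpa)
  have hle (p : ℝ × ℝ) : ‖Function.uncurry (gaussKer A B C) p‖ ≤
      ‖gaussFun ε p.1 * gaussFun ε p.2‖ := by
    simp only [Function.uncurry, norm_mul, norm_gaussKer, norm_gaussFun, ← Real.exp_add,
      Real.exp_le_exp, Complex.ofReal_re]
    linarith [hform p.1 p.2]
  exact (memLp_two_mul_prod hgauss hgauss).mono (continuous_gaussKer A B C).aestronglyMeasurable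
    (.of_forall hle)

/-- The Gaussian `exp(-γ x²)` as a vector of `L²(ℝ)`. -/
noncomputable def gaussVec {γ : ℂ} (hγ : 0 < γ.re) : Hsp := (memLp_gaussFun hγ).toLp _

lemma coeFn_gaussVec {γ : ℂ} (hγ : 0 < γ.re) :
    (gaussVec hγ : ℝ → ℂ) =ᵐ[volume] gaussFun γ :=
  (memLp_gaussFun hγ).coeFn_toLp

/-- `v` is an eigenvector of `S` for the real eigenvalue `t`, and no eigenvalue of `S` has modulus
larger than `t`. The vector `v` is allowed to vanish. -/
structure IsTopEigenvector {E : Type*} [NormedAddCommGroup E] [NormedSpace ℂ E] (S : E →L[ℂ] E)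
    (t : ℝ) (v : E) : Prop where
  apply_eq : S v = (t : ℂ) • v
  norm_le : ∀ s : ℂ, (∃ w : E, w ≠ 0 ∧ S w = s • w) → ‖s‖ ≤ t

lemma IsTopEigenvector.smul {E : Type*} [NormedAddCommGroup E] [NormedSpace ℂ E] {S : E →L[ℂ] E}
    {t : ℝ} {v : E} (h : IsTopEigenvector S t v) (c : ℂ) : IsTopEigenvector S t (c • v) :=
  ⟨by rw [map_smul, h.apply_eq, smul_comm], h.norm_le⟩

/-- The exponent `γ` of the Gaussian `exp(-γ x²)` fixed, up to scaling, by the Hermitian kernel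
`gaussKer (conj p) p q`. -/
noncomputable def fixedExponent (p : ℂ) (q : ℝ) : ℂ := √(p.re ^ 2 - q ^ 2) - p.im * I

lemma fixedExponent_re (p : ℂ) (q : ℝ) : (fixedExponent p q).re = √(p.re ^ 2 - q ^ 2) := by
  simp [fixedExponent]

lemma fixedExponent_im (p : ℂ) (q : ℝ) : (fixedExponent p q).im = -p.im := by
  simp [fixedExponent]

lemma fixedExponent_re_pos {p : ℂ} {q : ℝ} (hpq : |q| < p.re) : 0 < (fixedExponent p q).re := by
  rw [fixedExponent_re, Real.sqrt_pos, sub_pos, sq_lt_sq]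
  exact hpq.trans_le (le_abs_self _)

section HermitianGaussianKernel

variable {p : ℂ} {q : ℝ}

lemma integral_gaussKer_mul_gaussFun_fixedExponent (hpq : |q| < p.re) (x : ℝ) :
    ∫ y : ℝ, gaussKer (conj p) p q x y * gaussFun (fixedExponent p q) y =
      √(π / (p.re + (fixedExponent p q).re)) * gaussFun (fixedExponent p q) x := by
  have hsq : √(p.re ^ 2 - q ^ 2) ^ 2 = p.re ^ 2 - q ^ 2 :=
    Real.sq_sqrt (Real.sqrt_pos.1 (fixedExponent_re p q ▸ fixedExponent_re_pos hpq)).le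
  have hpos : 0 < p.re + (fixedExponent p q).re :=
    add_pos ((abs_nonneg q).trans_lt hpq) (fixedExponent_re_pos hpq)
  have hsum : p + fixedExponent p q = ((p.re + (fixedExponent p q).re : ℝ) : ℂ) :=
    Complex.ext (by simp) (by simp [fixedExponent_im])
  have hfixed : conj p - (q : ℂ) ^ 2 / (p + fixedExponent p q) = fixedExponent p q := by
    have hconj : conj p = p.re - p.im * I := Complex.ext (by simp) (by simp)
    have hne : ((p.re + √(p.re ^ 2 - q ^ 2) : ℝ) : ℂ) ≠ 0 :=
      Complex.ofReal_ne_zero.2 (fixedExponent_re p q ▸ hpos.ne')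
    have hsqC : ((√(p.re ^ 2 - q ^ 2) : ℝ) : ℂ) ^ 2 = (p.re : ℂ) ^ 2 - (q : ℂ) ^ 2 := by
      exact_mod_cast hsq
    rw [hsum, hconj, fixedExponent_re, fixedExponent, sub_right_comm]
    congr 1
    rw [sub_eq_iff_eq_add, ← sub_eq_iff_eq_add', eq_div_iff hne]
    push_cast
    linear_combination -hsqC
  rw [integral_gaussKer_mul_gaussFun (by rwa [hsum, Complex.ofReal_re]), hfixed, hsum,
    ofReal_sqrt_eq_cpow (by positivity)]
  push_cast
  rfl

lemma integral_norm_gaussFun_mul_norm_gaussKer (hpq : |q| < p.re) (y : ℝ) :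
    ∫ x : ℝ, ‖gaussFun (fixedExponent p q) x‖ * ‖gaussKer (conj p) p q x y‖ =
      √(π / (p.re + (fixedExponent p q).re)) * ‖gaussFun (fixedExponent p q) y‖ := by
  have hreal : fixedExponent p.re q = (fixedExponent p q).re := by
    simp [fixedExponent]
  have h := integral_gaussKer_mul_gaussFun_fixedExponent (p := p.re) (q := q) (by simpa using hpq) y
  rw [hreal] at h
  apply Complex.ofReal_injective
  rw [← integral_complex_ofReal]
  push_cast [ofReal_norm_gaussKer, ofReal_norm_gaussFun]
  simp only [Complex.conj_ofReal, Complex.ofReal_re] at h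
  simp only [Complex.conj_re, Complex.ofReal_re]
  rw [← h]
  refine integral_congr_ae (.of_forall fun x => ?_)
  simp only [gaussKer, gaussFun, ← Complex.exp_add]
  ring_nf

lemma IsKerOp.isTopEigenvector_gaussVec {S : Hsp →L[ℂ] Hsp} {m : ℝ} (hm : 0 ≤ m)
    (hpq : |q| < p.re) (hS : IsKerOp (fun x y => m * gaussKer (conj p) p q x y) S) :
    IsTopEigenvector S (m * √(π / (p.re + (fixedExponent p q).re)))
      (gaussVec (fixedExponent_re_pos hpq)) := by
  have hγ := coeFn_gaussVec (fixedExponent_re_pos hpq)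
  have hp : 0 < p.re := (abs_nonneg q).trans_lt hpq
  refine ⟨Lp.ext ?_, fun s ⟨v, hv, hsv⟩ => ?_⟩
  · filter_upwards [hS (gaussVec _), hγ, Lp.coeFn_smul
      ((m * √(π / (p.re + (fixedExponent p q).re)) : ℝ) : ℂ) (gaussVec (fixedExponent_re_pos hpq))]
      with x hSx hx hsmul
    rw [hSx, hsmul, Pi.smul_apply, hx, smul_eq_mul, Complex.ofReal_mul, mul_assoc,
      ← integral_gaussKer_mul_gaussFun_fixedExponent hpq, ← integral_const_mul]
    refine integral_congr_ae ?_
    filter_upwards [hγ] with y hy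
    rw [hy, mul_assoc]
  · have hdet : (q : ℂ).re ^ 2 < (conj p).re * p.re := by
      rw [Complex.ofReal_re, Complex.conj_re, ← sq, sq_lt_sq, abs_of_pos hp]
      exact hpq
    refine hS.norm_eigenvalue_le ((memLp_gaussKer (by simpa using hp) hdet).const_mul (m : ℂ))
      (memLp_gaussFun (fixedExponent_re_pos hpq)).norm
      (fun x => norm_pos_iff.2 (Complex.exp_ne_zero _)) (fun y => le_of_eq ?_) hv hsv
    simp only [norm_mul, Complex.norm_real, Real.norm_of_nonneg hm, mul_left_comm _ m]
    rw [integral_const_mul, integral_norm_gaussFun_mul_norm_gaussKer hpq, mul_assoc]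

end HermitianGaussianKernel

/-- The exponent of the Gaussian top eigenvector of `T* T`, for `T` with kernel
`gaussKer A B C`. -/
noncomputable def topExponent (A B C : ℂ) : ℂ :=
  fixedExponent (B - C ^ 2 / (2 * A.re : ℝ)) (‖C‖ ^ 2 / (2 * A.re))

section TopExponent

variable {A B C : ℂ}

lemma abs_normSq_div_lt_re (hA : 0 < A.re) (hdet : C.re ^ 2 < A.re * B.re) :
    |‖C‖ ^ 2 / (2 * A.re)| < (B - C ^ 2 / (2 * A.re : ℝ)).re := by
  rw [abs_of_nonneg (by positivity), Complex.sub_re, Complex.div_ofReal_re, lt_sub_iff_add_lt,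
    ← add_div, div_lt_iff₀ (by positivity), Complex.sq_norm, Complex.normSq_apply, sq,
    Complex.mul_re]
  linarith

lemma topExponent_re_pos (hA : 0 < A.re) (hdet : C.re ^ 2 < A.re * B.re) :
    0 < (topExponent A B C).re :=
  fixedExponent_re_pos (abs_normSq_div_lt_re hA hdet)

lemma topExponent_re_sq (hA : 0 < A.re) (hdet : C.re ^ 2 < A.re * B.re) :
    (topExponent A B C).re ^ 2 = (B.re - C.re ^ 2 / A.re) * (B.re + C.im ^ 2 / A.re) := by
  have hlt := (abs_normSq_div_lt_re hA hdet).le.trans (le_abs_self _)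
  rw [topExponent, fixedExponent_re, Real.sq_sqrt (sub_nonneg.2 (sq_le_sq.2 hlt)), Complex.sub_re,
    Complex.div_ofReal_re, Complex.sq_norm, Complex.normSq_apply, sq C, Complex.mul_re]
  field_simp
  ring

lemma topExponent_im (A B C : ℂ) : (topExponent A B C).im = C.re * C.im / A.re - B.im := by
  rw [topExponent, fixedExponent_im, Complex.sub_im, Complex.div_ofReal_im, sq, Complex.mul_im]
  ring

lemma IsKerOp.adjoint_comp_self_gaussKer {T : Hsp →L[ℂ] Hsp} (hA : 0 < A.re)
    (hdet : C.re ^ 2 < A.re * B.re) (hT : IsKerOp (gaussKer A B C) T) :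
    IsKerOp (fun x y => (√(π / (2 * A.re)) : ℝ) *
        gaussKer (conj (B - C ^ 2 / (2 * A.re : ℝ))) (B - C ^ 2 / (2 * A.re : ℝ))
          (‖C‖ ^ 2 / (2 * A.re) : ℝ) x y)
      (ContinuousLinearMap.adjoint T ∘L T) := by
  have hB : 0 < B.re := pos_of_mul_pos_right ((sq_nonneg C.re).trans_lt hdet) hA.le
  have hsum : conj A + A = (2 * A.re : ℝ) := by
    rw [add_comm, Complex.add_conj]
  have hadj : IsKerOp (gaussKer (conj B) (conj A) (conj C)) (ContinuousLinearMap.adjoint T) := by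
    simpa only [conj_gaussKer] using hT.adjoint (memLp_gaussKer hA hdet)
  have hcomp := hadj.comp hT
    (memLp_gaussKer (by simpa using hB) (by simpa [mul_comm B.re] using hdet))
    (memLp_gaussKer hA hdet)
  have hpos : 0 < (conj A + A).re := by simpa [hsum] using hA
  simp only [integral_gaussKer_mul_gaussKer hpos, hsum] at hcomp
  have hpi_div : 0 ≤ π / (2 * A.re) := by positivity
  simpa only [ofReal_sqrt_eq_cpow hpi_div, Complex.ofReal_div, Complex.ofReal_pow, map_sub,
    map_div₀, map_pow, Complex.conj_ofReal, Complex.conj_mul'] using hcomp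

lemma IsKerOp.exists_isTopEigenvector_gaussVec {T : Hsp →L[ℂ] Hsp} (hA : 0 < A.re)
    (hdet : C.re ^ 2 < A.re * B.re) (hT : IsKerOp (gaussKer A B C) T) :
    ∃ t : ℝ, IsTopEigenvector (ContinuousLinearMap.adjoint T ∘L T) t
      (gaussVec (topExponent_re_pos hA hdet)) :=
  ⟨_, (hT.adjoint_comp_self_gaussKer hA hdet).isTopEigenvector_gaussVec (Real.sqrt_nonneg _)
    (abs_normSq_div_lt_re hA hdet)⟩

end TopExponent

section Overlap

lemma exists_norm_smul_eq_one_norm_sub_sq {𝕜 E : Type*} [RCLike 𝕜] [NormedAddCommGroup E]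
    [InnerProductSpace 𝕜 E] {e g : E} (he : e ≠ 0) (hg : ‖g‖ = 1) :
    ∃ c : 𝕜, ‖c • e‖ = 1 ∧ ‖c • e - g‖ ^ 2 = 2 * (1 - ‖inner 𝕜 e g‖ / ‖e‖) := by
  obtain ⟨u, hu, hinner⟩ := RCLike.exists_norm_eq_mul_self (inner 𝕜 e g)
  have hunit : ‖(conj u / (‖e‖ : 𝕜)) • e‖ = 1 := by
    rw [norm_smul, norm_div, RCLike.norm_conj, hu, RCLike.norm_ofReal, abs_norm,
      one_div_mul_cancel (norm_ne_zero_iff.2 he)]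
  refine ⟨conj u / (‖e‖ : 𝕜), hunit, ?_⟩
  have hphase : inner 𝕜 ((conj u / (‖e‖ : 𝕜)) • e) g = ((‖inner 𝕜 e g‖ / ‖e‖ : ℝ) : 𝕜) := by
    rw [inner_smul_left, map_div₀, RCLike.conj_conj, RCLike.conj_ofReal, div_mul_eq_mul_div,
      ← hinner, RCLike.ofReal_div]
  rw [@norm_sub_sq 𝕜, hphase, RCLike.ofReal_re, hunit, hg]
  ring

variable {γ₁ γ₂ : ℂ} (h₁ : 0 < γ₁.re) (h₂ : 0 < γ₂.re)

include h₁ h₂ in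
lemma conj_add_ne_zero_of_re_pos : conj γ₁ + γ₂ ≠ 0 := fun h => by
  have := congrArg Complex.re h
  simp only [Complex.add_re, Complex.conj_re, Complex.zero_re] at this
  linarith

lemma norm_inner_gaussVec_sq :
    ‖inner ℂ (gaussVec h₁) (gaussVec h₂)‖ ^ 2 = π / ‖conj γ₁ + γ₂‖ := by
  have hinner : inner ℂ (gaussVec h₁) (gaussVec h₂) = (π / (conj γ₁ + γ₂)) ^ (1 / 2 : ℂ) := by
    rw [L2.inner_def, ← integral_gaussian_complex (by simpa using add_pos h₁ h₂)]
    refine integral_congr_ae ?_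
    filter_upwards [coeFn_gaussVec h₁, coeFn_gaussVec h₂] with x hx₁ hx₂
    rw [hx₁, hx₂, RCLike.inner_apply, conj_gaussFun, gaussFun, gaussFun, ← Complex.exp_add]
    ring_nf
  rw [hinner, show (1 / 2 : ℂ) = ((1 / 2 : ℝ) : ℂ) by norm_num, Complex.norm_cpow_real,
    ← Real.sqrt_eq_rpow, Real.sq_sqrt (norm_nonneg _), norm_div, Complex.norm_real,
    Real.norm_of_nonneg pi_pos.le]

lemma norm_gaussVec_pow_four : ‖gaussVec h₁‖ ^ 4 = π / (2 * γ₁.re) := by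
  have h := norm_inner_gaussVec_sq h₁ h₁
  rwa [inner_self_eq_norm_sq_to_K, norm_pow, RCLike.norm_ofReal, abs_norm, ← pow_mul, add_comm,
    Complex.add_conj, Complex.norm_real, Real.norm_of_nonneg (by positivity)] at h

lemma norm_conj_add_sq_sub (γ₁ γ₂ : ℂ) :
    ‖conj γ₁ + γ₂‖ ^ 2 - 4 * γ₁.re * γ₂.re = ‖γ₁ - γ₂‖ ^ 2 := by
  simp only [Complex.sq_norm, Complex.normSq_apply, Complex.add_re, Complex.add_im, Complex.sub_re,
    Complex.sub_im, Complex.conj_re, Complex.conj_im]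
  ring

lemma overlap_gaussVec_pow_four {N : ℂ} (hN : ‖N • gaussVec h₂‖ = 1) :
    (‖inner ℂ (gaussVec h₁) (N • gaussVec h₂)‖ / ‖gaussVec h₁‖) ^ 4 =
      4 * γ₁.re * γ₂.re / ‖conj γ₁ + γ₂‖ ^ 2 := by
  have hN4 : ‖N‖ ^ 4 * (π / (2 * γ₂.re)) = 1 := by
    rw [← norm_gaussVec_pow_four h₂, ← mul_pow, ← norm_smul, hN, one_pow]
  have hD : ‖conj γ₁ + γ₂‖ ≠ 0 := norm_ne_zero_iff.2 (conj_add_ne_zero_of_re_pos h₁ h₂)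
  rw [inner_smul_right, norm_mul, div_pow, mul_pow, norm_gaussVec_pow_four,
    show 4 = 2 * 2 from rfl, pow_mul ‖inner ℂ _ _‖, norm_inner_gaussVec_sq]
  field_simp at hN4 ⊢
  linear_combination 2 * hN4

lemma exists_norm_smul_gaussVec_sub_sq_le {N : ℂ} (hN : ‖N • gaussVec h₂‖ = 1) :
    ∃ c : ℂ, ‖c • gaussVec h₁‖ = 1 ∧
      ‖c • gaussVec h₁ - N • gaussVec h₂‖ ^ 2 ≤ 2 * (‖γ₁ - γ₂‖ ^ 2 / ‖conj γ₁ + γ₂‖ ^ 2) := by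
  have hne : gaussVec h₁ ≠ 0 := fun h0 => by
    have h := norm_gaussVec_pow_four h₁
    rw [h0, norm_zero, zero_pow four_ne_zero] at h
    exact (by positivity : π / (2 * γ₁.re) ≠ 0) h.symm
  have hD : ‖conj γ₁ + γ₂‖ ≠ 0 := norm_ne_zero_iff.2 (conj_add_ne_zero_of_re_pos h₁ h₂)
  obtain ⟨c, hc, hdist⟩ := exists_norm_smul_eq_one_norm_sub_sq (𝕜 := ℂ) hne hN
  refine ⟨c, hc, ?_⟩
  have hoverlap_le : ‖inner ℂ (gaussVec h₁) (N • gaussVec h₂)‖ / ‖gaussVec h₁‖ ≤ 1 := by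
    rw [div_le_one (norm_pos_iff.2 hne)]
    simpa [hN] using norm_inner_le_norm (𝕜 := ℂ) (gaussVec h₁) (N • gaussVec h₂)
  rw [hdist, ← norm_conj_add_sq_sub, sub_div, div_self (pow_ne_zero 2 hD),
    ← overlap_gaussVec_pow_four h₁ h₂ hN]
  gcongr
  exact pow_le_of_le_one (by positivity) hoverlap_le four_ne_zero

end Overlap

lemma exists_eq_smul_gaussVec_of_gaussC {γ : ℂ} (hγ : 0 < γ.re) {g : Hsp}
    (hg : ∀ᵐ x : ℝ, (g : ℝ → ℂ) x = gaussC γ x) :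
    g = (2 * γ / π : ℂ) ^ (1 / 4 : ℂ) • gaussVec hγ := by
  refine Lp.ext ?_
  filter_upwards [hg, coeFn_gaussVec hγ, Lp.coeFn_smul ((2 * γ / π : ℂ) ^ (1 / 4 : ℂ))
    (gaussVec hγ)] with x hgx hx hsmul
  rw [hgx, hsmul, Pi.smul_apply, hx, gaussC, gaussFun, smul_eq_mul]

lemma norm_smul_gaussVec_ofReal {α : ℝ} (hα : 0 < (α : ℂ).re) :
    ‖(2 * α / π : ℂ) ^ (1 / 4 : ℂ) • gaussVec hα‖ = 1 := by
  have hα' : 0 < α := hα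
  have hN : ((2 * α / π : ℂ) ^ (1 / 4 : ℂ)) ^ 4 = (2 * α / π : ℝ) := by
    rw [← Complex.cpow_nat_mul]
    norm_num
  rw [← pow_eq_one_iff_of_nonneg (norm_nonneg _) four_ne_zero, norm_smul, mul_pow,
    norm_gaussVec_pow_four, ← norm_pow, hN, Complex.norm_real,
    Real.norm_of_nonneg (by positivity), Complex.ofReal_re]
  field_simp

section NearGaussian

lemma add_mul_conj_re (c : ℂ) (τ : ℝ) : (c + τ * conj c).re = (1 + τ) * c.re := by
  rw [Complex.add_re, Complex.re_ofReal_mul, Complex.conj_re]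
  ring

lemma add_mul_conj_im (c : ℂ) (τ : ℝ) : (c + τ * conj c).im = (1 - τ) * c.im := by
  rw [Complex.add_im, Complex.im_ofReal_mul, Complex.conj_im]
  ring

variable {c : ℂ} {τ α : ℝ}

lemma add_mul_conj_re_pos (hc : 0 < c.re) (hτ : 0 < τ) : 0 < (c + τ * conj c).re := by
  rw [add_mul_conj_re]
  positivity

lemma re_sq_lt_add_mul_conj_re_sq (hc : 0 < c.re) (hτ : 0 < τ) :
    c.re ^ 2 < (c + τ * conj c).re * (c + τ * conj c).re := by
  rw [add_mul_conj_re]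
  nlinarith [mul_pos hτ hc, mul_pos hc hc]

lemma abs_topExponent_re_sq_sub_le (hc : 0 < c.re) (hτ : 0 < τ) :
    |(topExponent (c + τ * conj c) (c + τ * conj c) c).re ^ 2 - 2 * τ * ‖c‖ ^ 2| ≤
      3 * τ ^ 2 * ‖c‖ ^ 2 := by
  have hdiff : (topExponent (c + τ * conj c) (c + τ * conj c) c).re ^ 2 - 2 * τ * ‖c‖ ^ 2 =
      τ ^ 2 * (c.re ^ 2 - (3 + 2 * τ) / (1 + τ) ^ 2 * c.im ^ 2) := by
    rw [topExponent_re_sq (add_mul_conj_re_pos hc hτ) (re_sq_lt_add_mul_conj_re_sq hc hτ),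
      add_mul_conj_re, Complex.sq_norm, Complex.normSq_apply]
    field_simp
    ring
  have hcoeff : (3 + 2 * τ) / (1 + τ) ^ 2 ≤ 3 := by
    rw [div_le_iff₀ (by positivity)]
    nlinarith
  have hcoeff_nonneg : 0 ≤ (3 + 2 * τ) / (1 + τ) ^ 2 := by positivity
  rw [hdiff, abs_mul, abs_of_nonneg (sq_nonneg τ), mul_comm 3, mul_assoc, Complex.sq_norm,
    Complex.normSq_apply]
  gcongr
  rw [abs_le]
  constructor <;> nlinarith [mul_self_nonneg c.re, mul_self_nonneg c.im]

lemma topExponent_im_sq_le (hc : 0 < c.re) (hτ : 0 < τ) :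
    (topExponent (c + τ * conj c) (c + τ * conj c) c).im ^ 2 ≤ τ ^ 3 / 4 * ‖c‖ ^ 2 := by
  have him : (topExponent (c + τ * conj c) (c + τ * conj c) c).im = τ ^ 2 / (1 + τ) * c.im := by
    rw [topExponent_im, add_mul_conj_re, add_mul_conj_im]
    field_simp
    ring
  have hcoeff : (τ ^ 2 / (1 + τ)) ^ 2 ≤ τ ^ 3 / 4 := by
    rw [div_pow, div_le_div_iff₀ (by positivity) four_pos]
    nlinarith [mul_nonneg (pow_pos hτ 3).le (sq_nonneg (1 - τ))]
  rw [him, mul_pow, ← sq_abs c.im]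
  gcongr
  exact Complex.abs_im_le_norm c

lemma norm_topExponent_sub_sq_le (hc : 0 < c.re) (hτ : 0 < τ) (hα : 0 < α)
    (hαc : α ^ 2 = 2 * τ * ‖c‖ ^ 2) :
    ‖topExponent (c + τ * conj c) (c + τ * conj c) c - α‖ ^ 2 ≤
      9 / 2 * τ ^ 2 * ‖conj (topExponent (c + τ * conj c) (c + τ * conj c) c) + α‖ ^ 2 := by
  have hre_pos := topExponent_re_pos (add_mul_conj_re_pos hc hτ)
    (re_sq_lt_add_mul_conj_re_sq hc hτ)
  have hre := abs_topExponent_re_sq_sub_le hc hτ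
  have him := topExponent_im_sq_le hc hτ
  generalize topExponent (c + τ * conj c) (c + τ * conj c) c = γ at *
  have hre_sub : (γ.re - α) ^ 2 ≤ 9 / 4 * τ ^ 2 * (γ.re + α) ^ 2 := by
    have hfactor : |γ.re - α| * (γ.re + α) ≤ 3 / 2 * τ * (γ.re + α) * (γ.re + α) := by
      calc |γ.re - α| * (γ.re + α) = |γ.re ^ 2 - 2 * τ * ‖c‖ ^ 2| := by
            rw [← hαc, sq_sub_sq, abs_mul, abs_of_pos (add_pos hre_pos hα), mul_comm]
        _ ≤ 3 * τ ^ 2 * ‖c‖ ^ 2 := hre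
        _ = 3 / 2 * τ * (α * α) := by rw [← sq, hαc]; ring
        _ ≤ 3 / 2 * τ * ((γ.re + α) * (γ.re + α)) := by gcongr <;> linarith
        _ = 3 / 2 * τ * (γ.re + α) * (γ.re + α) := by ring
    have hle := le_of_mul_le_mul_right hfactor (add_pos hre_pos hα)
    calc (γ.re - α) ^ 2 = |γ.re - α| ^ 2 := (sq_abs _).symm
      _ ≤ (3 / 2 * τ * (γ.re + α)) ^ 2 := by gcongr
      _ = 9 / 4 * τ ^ 2 * (γ.re + α) ^ 2 := by ring
  have him_le : γ.im ^ 2 ≤ 9 / 4 * τ ^ 2 * (γ.re + α) ^ 2 := by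
    calc γ.im ^ 2 ≤ τ ^ 3 / 4 * ‖c‖ ^ 2 := him
      _ = 1 / 8 * τ ^ 2 * α ^ 2 := by rw [hαc]; ring
      _ ≤ 9 / 4 * τ ^ 2 * (γ.re + α) ^ 2 := by gcongr <;> linarith
  simp only [Complex.sq_norm, Complex.normSq_apply, Complex.sub_re, Complex.sub_im,
    Complex.add_re, Complex.add_im, Complex.conj_re, Complex.conj_im, Complex.ofReal_re,
    Complex.ofReal_im]
  nlinarith [mul_nonneg (sq_nonneg τ) (sq_nonneg γ.im)]

lemma exists_isTopEigenvector_norm_sub_le (hc : 0 < c.re) (hτ : 0 < τ) (hα : 0 < (α : ℂ).re)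
    (hαc : α ^ 2 = 2 * τ * ‖c‖ ^ 2) {T : Hsp →L[ℂ] Hsp}
    (hT : IsKerOp (gaussKer (c + τ * conj c) (c + τ * conj c) c) T) {N : ℂ}
    (hN : ‖N • gaussVec hα‖ = 1) :
    ∃ (t : ℝ) (v : Hsp), ‖v‖ = 1 ∧ IsTopEigenvector (ContinuousLinearMap.adjoint T ∘L T) t v ∧
      ‖v - N • gaussVec hα‖ ≤ 3 * τ := by
  have hγ := topExponent_re_pos (add_mul_conj_re_pos hc hτ) (re_sq_lt_add_mul_conj_re_sq hc hτ)
  obtain ⟨t, ht⟩ := hT.exists_isTopEigenvector_gaussVec (add_mul_conj_re_pos hc hτ)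
    (re_sq_lt_add_mul_conj_re_sq hc hτ)
  obtain ⟨u, hu, hdist⟩ := exists_norm_smul_gaussVec_sub_sq_le hγ hα hN
  refine ⟨t, _, hu, ht.smul u, (sq_le_sq₀ (norm_nonneg _) (by positivity)).1 (hdist.trans ?_)⟩
  have hD := norm_pos_iff.2 (conj_add_ne_zero_of_re_pos hγ hα)
  have hratio := (div_le_iff₀ (pow_pos hD 2)).2 (norm_topExponent_sub_sq_le hc hτ hα hαc)
  linarith

end NearGaussian

lemma kerHr_eq_gaussKer (W : ℝ) (ζ : ℂ) (a b : ℝ) :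
    kerHr W ζ a b = gaussKer (W ^ 2 * ζ ^ 2 + (a + b * I) / 2) (W ^ 2 * ζ ^ 2 + (a + b * I) / 2)
      (W ^ 2 * ζ ^ 2) := by
  funext x y
  rw [kerHr, gaussKer]
  ring_nf

lemma eq_ofReal_mul_conj_of_sq_eq {c β : ℂ} {α : ℝ} (hα : α ≠ 0)
    (h : (α : ℂ) ^ 2 = 2 * c * β) : β = (α ^ 2 / (2 * ‖c‖ ^ 2) : ℝ) * conj c := by
  have hc : c ≠ 0 := by
    rintro rfl
    simp [hα] at h
  push_cast
  rw [h, div_mul_eq_mul_div, eq_div_iff (by simpa), ← Complex.mul_conj']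
  ring

theorem stmt_11_general {ζ : ℂ} {a b W α : ℝ} (hζ : 0 < (ζ ^ 2).re) (hα : 0 < α)
    (hα_sq : (α : ℂ) ^ 2 = (W : ℂ) ^ 2 * ζ ^ 2 * ((a : ℂ) + (b : ℂ) * I)) {Khr : Hsp →L[ℂ] Hsp}
    (hK : IsKerOp (kerHr W ζ a b) Khr) {g : Hsp}
    (hg : ∀ᵐ x : ℝ, (g : ℝ → ℂ) x = gaussC (α : ℂ) x) :
    ∃ (t : ℝ) (gt : Hsp),
      ‖gt‖ = 1 ∧
      (ContinuousLinearMap.adjoint Khr ∘L Khr) gt = (t : ℂ) • gt ∧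
      (∀ s : ℂ, (∃ v : Hsp, v ≠ 0 ∧ (ContinuousLinearMap.adjoint Khr ∘L Khr) v = s • v) →
        ‖s‖ ≤ t) ∧
      ‖gt - g‖ ≤ 3 / 2 * ‖(a : ℂ) + (b : ℂ) * I‖ / (W ^ 2 * ‖ζ‖ ^ 2) := by
  have hW : W ≠ 0 := by
    rintro rfl
    simp [hα.ne'] at hα_sq
  set c : ℂ := (W : ℂ) ^ 2 * ζ ^ 2 with hc
  have hc_re : 0 < c.re := by
    rw [hc, ← Complex.ofReal_pow, Complex.re_ofReal_mul]
    positivity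
  have hc_norm : ‖c‖ = W ^ 2 * ‖ζ‖ ^ 2 := by simp [hc]
  have hc_pos : 0 < ‖c‖ := norm_pos_iff.2 fun h => by simp [h] at hc_re
  have hα_norm : α ^ 2 = ‖c‖ * ‖(a : ℂ) + (b : ℂ) * I‖ := by
    simpa using congrArg norm hα_sq
  obtain rfl := exists_eq_smul_gaussVec_of_gaussC (γ := α) hα hg
  have hβ := eq_ofReal_mul_conj_of_sq_eq (c := c) (β := (a + b * I) / 2) hα.ne'
    (by rw [hα_sq]; ring)
  rw [kerHr_eq_gaussKer, ← hc, hβ] at hK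
  obtain ⟨t, v, hv, htop, hdist⟩ := exists_isTopEigenvector_norm_sub_le hc_re (by positivity) hα
    (by field_simp) hK (norm_smul_gaussVec_ofReal hα)
  refine ⟨t, v, hv, htop.apply_eq, htop.norm_le, hdist.trans_eq ?_⟩
  rw [hα_norm, ← hc_norm]
  field_simp

/-- if `ζ²(a+ib)` is real and positive and `α > 0` satisfies
`α² = W²ζ²(a+ib)`, then the top (normalized) eigenfunction `g̃` of `K_hr*K_hr`
can be chosen with `‖g̃ − g_α‖ ≤ C'·W^{−2}`. -/
theorem stmt_11 :
    ∀ (ζ : ℂ) (a b : ℝ), ‖ζ‖ = 1 → 0 < (ζ^2).re → 0 < a →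
    (ζ^2 * ((a : ℂ) + (b : ℂ) * Complex.I)).im = 0 →
    0 < (ζ^2 * ((a : ℂ) + (b : ℂ) * Complex.I)).re →
    ∃ C' : ℝ, 0 < C' ∧ ∃ W₀ : ℝ, 0 < W₀ ∧
    ∀ W : ℝ, W₀ ≤ W →
    ∀ α : ℝ, 0 < α → ((α : ℂ))^2 = (W : ℂ)^2 * ζ^2 * ((a : ℂ) + (b : ℂ) * Complex.I) →
    ∀ Khr : Hsp →L[ℂ] Hsp, IsKerOp (kerHr W ζ a b) Khr →
    ∀ g : Hsp, (∀ᵐ x : ℝ, (g : ℝ → ℂ) x = gaussC (α : ℂ) x) →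
    ∃ (t : ℝ) (gt : Hsp),
      ‖gt‖ = 1 ∧
      (ContinuousLinearMap.adjoint Khr ∘L Khr) gt = ((t : ℂ)) • gt ∧
      (∀ s : ℂ, (∃ v : Hsp, v ≠ 0 ∧ (ContinuousLinearMap.adjoint Khr ∘L Khr) v = s • v) →
        ‖s‖ ≤ t) ∧
      ‖gt - g‖ ≤ C' * W ^ (-2 : ℝ) := by
  intro ζ a b hζ_norm hζ ha _ _
  refine ⟨3 / 2 * ‖(a : ℂ) + (b : ℂ) * I‖, ?_, 1, one_pos,
    fun W hW α hα hα_sq Khr hK g hg => ?_⟩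
  · have hne : (a : ℂ) + (b : ℂ) * I ≠ 0 := fun h => by simpa [ha.ne'] using congrArg Complex.re h
    positivity
  · simpa [hζ_norm, div_eq_mul_inv, Real.rpow_neg (zero_le_one.trans hW)] using
      stmt_11_general hζ hα hα_sq hK hg
end
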